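/- arXiv:2506.14673 — 5 statements merged into one kernel-verified Lean document; each statement's English description precedes it below -/
import Mathlib

section
/- Let m, κ ∈ ℕ, ε > 0, and X₀, X₁, X₂ ∈ (𝒳^m)^κ be fixed. Suppose ℱ ⊆ ℝ^𝒳 admits an (ε/16, m)-discretization F on X₀, X₁, X₂. Then P_{b∼Uniform({0,1}^κ)}( ∃ f ∈ ℱ : S_b^{(>)}(f, 15ε/16) ≥ 4801/10000 and S_{1−b}^{(≤)}(f, 2ε/16) > 9701/10000 ) ≤ |F| · sup_{f∈F} P_{b∼Uniform({0,1}^κ)}( S_b^{(>)}(f, 12ε/16) ≥ 4769/10000 and S_{1−b}^{(>)}(f, 12ε/16) < 331/10000 ). -/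
/-!
Replace `f` by its discretization `g = π(f)`. Off the exceptional set `I` the three block means of
`f` and `g` differ by at most `ε/16`, so the differences `|μ_{X_l} - μ_{X_2}|` change by at most
`2ε/16` (`abs_blockMean_diff_le`). Hence `> 15ε/16` for `f` gives `> 12ε/16` for `g`, and
`≤ 2ε/16` for `f` gives `≤ 12ε/16` for `g`. The set `I` costs a fraction `2/625 = 32/10000`
(`frac_le_frac_add`), which accounts for `4801 - 32 = 4769` and `10000 - 9701 + 32 = 331`.
The event for `ℱ` is therefore contained in the union over `g ∈ F` of the events on the right, and
a union bound finishes the proof.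
-/

open MeasureTheory

/-- Sample mean of `f` on a block of `m` points. -/
noncomputable def blockMean {𝒳 : Type*} {m : ℕ} (f : 𝒳 → ℝ) (x : Fin m → 𝒳) : ℝ :=
  (∑ j, f (x j)) / m

open scoped Classical in
/-- The fraction of indices `i ∈ {1,…,κ}` satisfying the predicate `P`. -/
noncomputable def frac {κ : ℕ} (P : Fin κ → Prop) : ℝ :=
  ((Finset.univ.filter P).card : ℝ) / κ

/-- Inclusion of the index set `{0,1}` into `{0,1,2}`. -/
def inc2 : Fin 2 → Fin 3 := Fin.castLE (by norm_num)

/-- `ℱ` admits an `(ε, m)`-discretization `F` on the three samples `X 0, X 1, X 2`. -/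
def IsEpsDiscretization {𝒳 : Type*} (ε : ℝ) (m κ : ℕ)
    (X : Fin 3 → Fin κ → Fin m → 𝒳) (ℱ : Set (𝒳 → ℝ)) (F : Finset (𝒳 → ℝ)) : Prop :=
  ∀ f ∈ ℱ, ∃ g ∈ F, ∃ I : Finset (Fin κ), (I.card : ℝ) ≤ 2 * κ / 625 ∧
    ∀ i : Fin κ, i ∉ I → ∀ l : Fin 3,
      ∑ j : Fin m, |f (X l i j) - g (X l i j)| / m ≤ ε

/-- An implication that holds off a set of at most `2κ/625` indices bounds the fractions up to
`2/625`; for `κ = 0` both fractions are `0`. -/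
lemma frac_le_frac_add {κ : ℕ} {P Q : Fin κ → Prop} (I : Finset (Fin κ))
    (hI : (I.card : ℝ) ≤ 2 * κ / 625) (h : ∀ i, i ∉ I → P i → Q i) :
    frac P ≤ frac Q + 2 / 625 := by
  classical
  unfold frac
  rcases Nat.eq_zero_or_pos κ with rfl | hκ
  · norm_num
  have hκ' : (0 : ℝ) < κ := by exact_mod_cast hκ
  have hsub : Finset.univ.filter P ⊆ Finset.univ.filter Q ∪ I := by
    intro i hi
    by_cases hiI : i ∈ I
    · simp [hiI]
    · simp only [Finset.mem_filter, Finset.mem_univ, true_and] at hi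
      simp [h i hiI hi]
  have hcard : ((Finset.univ.filter P).card : ℝ) ≤ (Finset.univ.filter Q).card + I.card := by
    exact_mod_cast (Finset.card_le_card hsub).trans (Finset.card_union_le _ _)
  have heq : ((Finset.univ.filter Q).card : ℝ) / κ + 2 / 625
      = ((Finset.univ.filter Q).card + 2 * κ / 625) / κ := by
    field_simp
  have hle : ((Finset.univ.filter P).card : ℝ) / κ ≤ (Finset.univ.filter Q).card / κ + 2 / 625 := by
    rw [heq]
    gcongr
    linarith
  convert hle

lemma frac_add_frac_le_one {κ : ℕ} {P Q : Fin κ → Prop} (h : ∀ i, P i → ¬ Q i) :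
    frac P + frac Q ≤ 1 := by
  classical
  unfold frac
  rw [← add_div]
  refine div_le_one_of_le₀ ?_ (Nat.cast_nonneg _)
  have hdisj : Disjoint (Finset.univ.filter P) (Finset.univ.filter Q) :=
    Finset.disjoint_filter.2 fun i _ => h i
  have hcard := Finset.card_le_univ (Finset.univ.filter P ∪ Finset.univ.filter Q)
  rw [Finset.card_union_of_disjoint hdisj, Fintype.card_fin] at hcard
  have hcard' : ((Finset.univ.filter P).card : ℝ) + (Finset.univ.filter Q).card ≤ κ := by
    exact_mod_cast hcard
  convert hcard'

lemma abs_blockMean_sub_le {𝒳 : Type*} {m : ℕ} (f g : 𝒳 → ℝ) (x : Fin m → 𝒳) :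
    |blockMean f x - blockMean g x| ≤ ∑ j, |f (x j) - g (x j)| / m := by
  unfold blockMean
  rw [← sub_div, ← Finset.sum_sub_distrib, abs_div, Nat.abs_cast, ← Finset.sum_div]
  gcongr
  exact Finset.abs_sum_le_sum_abs _ _

/-- If `f` and `g` are `δ`-close in empirical `L¹` on two blocks, the absolute differences of their
means across the two blocks are `2δ`-close. -/
lemma abs_blockMean_diff_le {𝒳 : Type*} {m : ℕ} {f g : 𝒳 → ℝ} {x y : Fin m → 𝒳} {δ : ℝ}
    (hx : ∑ j, |f (x j) - g (x j)| / m ≤ δ) (hy : ∑ j, |f (y j) - g (y j)| / m ≤ δ) :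
    |(|blockMean f x - blockMean f y|) - (|blockMean g x - blockMean g y|)| ≤ 2 * δ := by
  have h1 := (abs_blockMean_sub_le f g x).trans hx
  have h2 := (abs_blockMean_sub_le f g y).trans hy
  refine (abs_abs_sub_abs_le_abs_sub _ _).trans ?_
  rw [abs_le] at *
  constructor <;> linarith [h1.1, h1.2, h2.1, h2.2]

/-- Discretization lemma: given an `(ε/16, m)`-discretization `F` of `ℱ` on fixed samples
`X 0, X 1, X 2`, the probability (over uniform `b ∈ {0,1}^κ`) that some `f ∈ ℱ` has
`S_b^{(>)}(f, 15ε/16) ≥ 4801/10000` and `S_{1-b}^{(≤)}(f, 2ε/16) > 9701/10000` is at most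
`|F|` times the sup over `f ∈ F` of the probability that `S_b^{(>)}(f, 12ε/16) ≥ 4769/10000`
and `S_{1-b}^{(>)}(f, 12ε/16) < 331/10000`. -/
theorem mom_discretization
    {𝒳 : Type*} (m κ : ℕ) (ε : ℝ) (hε : 0 < ε)
    (X : Fin 3 → Fin κ → Fin m → 𝒳) (ℱ : Set (𝒳 → ℝ)) (F : Finset (𝒳 → ℝ))
    (hF : IsEpsDiscretization (ε / 16) m κ X ℱ F) :
    (PMF.uniformOfFintype (Fin κ → Fin 2)).toMeasure
      {b | ∃ f ∈ ℱ,
        4801 / 10000 ≤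
          (frac fun i =>
            15 * ε / 16 < |blockMean f (X (inc2 (b i)) i) - blockMean f (X 2 i)|) ∧
        9701 / 10000 <
          frac fun i =>
            |blockMean f (X (inc2 (1 - b i)) i) - blockMean f (X 2 i)| ≤ 2 * ε / 16}
    ≤ (F.card : ENNReal) *
      ⨆ f ∈ F, (PMF.uniformOfFintype (Fin κ → Fin 2)).toMeasure
        {b | 4769 / 10000 ≤
            (frac fun i =>
              12 * ε / 16 < |blockMean f (X (inc2 (b i)) i) - blockMean f (X 2 i)|) ∧
          (frac fun i =>
              12 * ε / 16 < |blockMean f (X (inc2 (1 - b i)) i) - blockMean f (X 2 i)|)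
            < 331 / 10000} := by
  set μ := (PMF.uniformOfFintype (Fin κ → Fin 2)).toMeasure
  set E : (𝒳 → ℝ) → Set (Fin κ → Fin 2) := fun f =>
    {b | 4769 / 10000 ≤
        (frac fun i =>
          12 * ε / 16 < |blockMean f (X (inc2 (b i)) i) - blockMean f (X 2 i)|) ∧
      (frac fun i =>
          12 * ε / 16 < |blockMean f (X (inc2 (1 - b i)) i) - blockMean f (X 2 i)|)
        < 331 / 10000} with hE
  have hunion : μ (⋃ g ∈ F, E g) ≤ (F.card : ENNReal) * ⨆ f ∈ F, μ (E f) := by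
    refine (measure_biUnion_finset_le F E).trans ?_
    rw [← nsmul_eq_mul]
    exact Finset.sum_le_card_nsmul _ _ _ fun g hg => le_iSup₂_of_le g hg le_rfl
  refine (measure_mono ?_).trans hunion
  rintro b ⟨f, hf, hfar, hnear⟩
  obtain ⟨g, hg, I, hI, hfg⟩ := hF f hf
  have hclose : ∀ i, i ∉ I → ∀ l : Fin 3, _ := fun i hi l =>
    abs_le.1 (abs_blockMean_diff_le (hfg i hi l) (hfg i hi 2))
  have hfar' := frac_le_frac_add
    (P := fun i => 15 * ε / 16 < |blockMean f (X (inc2 (b i)) i) - blockMean f (X 2 i)|)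
    (Q := fun i => 12 * ε / 16 < |blockMean g (X (inc2 (b i)) i) - blockMean g (X 2 i)|)
    I hI fun i hi hP => by linarith [(hclose i hi (inc2 (b i))).2]
  have hnear' := frac_le_frac_add
    (P := fun i => |blockMean f (X (inc2 (1 - b i)) i) - blockMean f (X 2 i)| ≤ 2 * ε / 16)
    (Q := fun i => |blockMean g (X (inc2 (1 - b i)) i) - blockMean g (X 2 i)| ≤ 12 * ε / 16)
    I hI fun i hi hP => by linarith [(hclose i hi (inc2 (1 - b i))).1]
  have hcompl := frac_add_frac_le_one
    (P := fun i => |blockMean g (X (inc2 (1 - b i)) i) - blockMean g (X 2 i)| ≤ 12 * ε / 16)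
    (Q := fun i => 12 * ε / 16 < |blockMean g (X (inc2 (1 - b i)) i) - blockMean g (X 2 i)|)
    fun i => not_lt.2
  refine Set.mem_iUnion₂.2 ⟨g, hg, ?_, ?_⟩ <;> linarith
end

section
/- Let m, κ ∈ ℕ, ε > 0, and X₀, X₁, X₂ ∈ (𝒳^m)^κ be fixed. Then for any function f : 𝒳 → ℝ, P_{b∼Uniform({0,1}^κ)}( S_b^{(>)}(f, 12ε/16) ≥ 4769/10000 and S_{1−b}^{(>)}(f, 12ε/16) < 331/10000 ) ≤ exp(−κ/50). -/
/-!
Write `D(b) = ∑ᵢ (1{q i (b i)} - 1{q i (1 - b i)})`, where `q i c` says that the block mean of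
`X c i` is far from that of `X 2 i`. On the event, `D(b) ≥ (4438/10000) κ`. Swapping `b i` with
`1 - b i` flips the sign of the `i`-th summand, which lies in `{-1, 0, 1}`, so the `i`-th factor
of the moment generating function is `cosh 0` or `cosh t`, at most `exp (t² / 2)`. The Chernoff
bound with `t = 2/5` gives probability at most `exp (-(0.4438 t - t² / 2) κ) ≤ exp (-κ / 50)`.
-/

open MeasureTheory

open scoped Classical in
/-- The signed indicator `1{q i c} - 1{q i (1 - c)}`, i.e. the contribution of index `i` to
`κ (S_b - S_{1-b})` when `b i = c`. -/
noncomputable def signedInd {κ : ℕ} (q : Fin κ → Fin 2 → Prop) (i : Fin κ) (c : Fin 2) : ℝ :=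
  (if q i c then 1 else 0) - (if q i (1 - c) then 1 else 0)

lemma sum_exp_signedInd_le {κ : ℕ} (q : Fin κ → Fin 2 → Prop) (i : Fin κ) (t : ℝ) :
    ∑ c, Real.exp (t * signedInd q i c) ≤ 2 * Real.exp (t ^ 2 / 2) := by
  have h1 : (1 : ℝ) ≤ Real.exp (t ^ 2 / 2) := Real.one_le_exp (by positivity)
  have h2 := Real.cosh_le_exp_half_sq t
  rw [Real.cosh_eq] at h2
  rw [Fin.sum_univ_two]
  by_cases h : q i 0 <;> by_cases h' : q i 1 <;> simp [signedInd, h, h'] <;> linarith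

/-- The moment generating function bound, summed over all `b` rather than averaged. -/
lemma sum_exp_sum_signedInd_le {κ : ℕ} (q : Fin κ → Fin 2 → Prop) (t : ℝ) :
    ∑ b : Fin κ → Fin 2, Real.exp (t * ∑ i, signedInd q i (b i))
      ≤ (2 * Real.exp (t ^ 2 / 2)) ^ κ := by
  calc ∑ b : Fin κ → Fin 2, Real.exp (t * ∑ i, signedInd q i (b i))
      = ∑ b : Fin κ → Fin 2, ∏ i, Real.exp (t * signedInd q i (b i)) := by
        simp only [Finset.mul_sum, Real.exp_sum]
    _ = ∏ i, ∑ c, Real.exp (t * signedInd q i c) := by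
        rw [Finset.prod_univ_sum, Fintype.piFinset_univ]
    _ ≤ ∏ _i : Fin κ, (2 * Real.exp (t ^ 2 / 2)) :=
        Finset.prod_le_prod (fun i _ => Finset.sum_nonneg fun c _ => (Real.exp_pos _).le)
          (fun i _ => sum_exp_signedInd_le q i t)
    _ = _ := by simp

lemma sum_signedInd_eq {κ : ℕ} (hκ : 0 < κ) (q : Fin κ → Fin 2 → Prop) (b : Fin κ → Fin 2) :
    ∑ i, signedInd q i (b i)
      = κ * ((frac fun i => q i (b i)) - frac fun i => q i (1 - b i)) := by
  have : (κ : ℝ) ≠ 0 := by positivity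
  simp only [signedInd, frac, Finset.sum_sub_distrib, Finset.sum_boole]
  field_simp

open scoped Classical in
/-- Counting form of the permutation lemma, for arbitrary predicates. -/
lemma card_event_le {κ : ℕ} (q : Fin κ → Fin 2 → Prop) :
    (Fintype.card {b : Fin κ → Fin 2 // 4769 / 10000 ≤ (frac fun i => q i (b i)) ∧
      (frac fun i => q i (1 - b i)) < 331 / 10000} : ℝ) ≤ 2 ^ κ * Real.exp (-(κ : ℝ) / 50) := by
  rcases Nat.eq_zero_or_pos κ with rfl | hκ
  -- For `κ = 0` both fractions are `0 / 0 = 0`, so the event is empty.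
  · rw [Fintype.card_eq_zero_iff.mpr ⟨fun b => by
      have := b.2.1
      norm_num [frac] at this⟩]
    simp
  have hκ' : (0 : ℝ) < κ := by exact_mod_cast hκ
  have key := sum_exp_sum_signedInd_le q (2 / 5)
  rw [Fintype.card_subtype]
  set S := Finset.univ.filter fun b : Fin κ → Fin 2 =>
    4769 / 10000 ≤ (frac fun i => q i (b i)) ∧ (frac fun i => q i (1 - b i)) < 331 / 10000
  have hS : (S.card : ℝ) * Real.exp (2 / 5 * (κ * (4438 / 10000)))
      ≤ (2 * Real.exp ((2 / 5) ^ 2 / 2)) ^ κ := by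
    refine le_trans ?_ key
    rw [← nsmul_eq_mul]
    refine le_trans (Finset.card_nsmul_le_sum S _ _ fun b hb => ?_)
      (Finset.sum_le_sum_of_subset_of_nonneg (Finset.subset_univ S)
        fun b _ _ => (Real.exp_pos _).le)
    have hb' := (Finset.mem_filter.mp hb).2
    rw [sum_signedInd_eq hκ]
    gcongr
    linarith [hb'.1, hb'.2]
  rw [mul_pow, ← Real.exp_nat_mul] at hS
  have hexp : Real.exp (κ * ((2 / 5) ^ 2 / 2))
      ≤ Real.exp (-(κ : ℝ) / 50) * Real.exp (2 / 5 * (κ * (4438 / 10000))) := by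
    rw [← Real.exp_add]
    gcongr
    linarith
  refine le_of_mul_le_mul_right (hS.trans ?_) (Real.exp_pos (2 / 5 * (κ * (4438 / 10000))))
  rw [mul_assoc]
  gcongr

/-- Permutation lemma: for any fixed samples `X 0, X 1, X 2` and any function `f`, the
probability over uniform `b ∈ {0,1}^κ` that `S_b^{(>)}(f, 12ε/16) ≥ 4769/10000` while
`S_{1-b}^{(>)}(f, 12ε/16) < 331/10000` is at most `exp(-κ/50)`. -/
theorem mom_permutation
    {𝒳 : Type*} (m κ : ℕ) (ε : ℝ) (hε : 0 < ε)
    (X : Fin 3 → Fin κ → Fin m → 𝒳) (f : 𝒳 → ℝ) :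
    (PMF.uniformOfFintype (Fin κ → Fin 2)).toMeasure
      {b | 4769 / 10000 ≤
          (frac fun i =>
            12 * ε / 16 < |blockMean f (X (inc2 (b i)) i) - blockMean f (X 2 i)|) ∧
        (frac fun i =>
            12 * ε / 16 < |blockMean f (X (inc2 (1 - b i)) i) - blockMean f (X 2 i)|)
          < 331 / 10000}
    ≤ ENNReal.ofReal (Real.exp (-(κ : ℝ) / 50)) := by
  classical
  rw [PMF.toMeasure_uniformOfFintype_apply _ (Set.toFinite _).measurableSet]
  refine ENNReal.div_le_of_le_mul ?_
  have h := card_event_le fun (i : Fin κ) (c : Fin 2) =>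
    12 * ε / 16 < |blockMean f (X (inc2 c) i) - blockMean f (X 2 i)|
  have h' := ENNReal.ofReal_le_ofReal h
  rw [ENNReal.ofReal_natCast, mul_comm (2 ^ κ), ENNReal.ofReal_mul (Real.exp_pos _).le] at h'
  convert h' using 2
  · exact Fintype.card_congr (Equiv.refl _)
  · simp [ENNReal.ofReal_pow]
end

section
/- Let 1 ≤ p ≤ 2 and let X₁,…,X_m be i.i.d. real-valued random variables with distribution 𝒟. Let μ̂ = (1/m)·Σ_{i=1}^m X_i, μ = E[X₁], and suppose v_p ≥ E[|X₁ − μ|^p] with v_p < ∞. Then E[|μ̂ − μ|^p] ≤ 2·v_p / m^{p−1}. -/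
/-!
Write `Y = X - μ` for a centred sample and `S` for the sum of the earlier ones. The scalar
Clarkson inequality `|a + b|^p + |a - b|^p ≤ 2|a|^p + 2|b|^p` (`clarkson_scalar`, valid for
`p ≤ 2`) is integrated over `b = Y` with `a` fixed. Jensen's inequality gives
`E|a - Y|^p ≥ |a|^p` because `Y` has mean zero, hence `E|a + Y|^p ≤ |a|^p + 2 E|Y|^p`
(`one_step`). Taking `a = S` and inducting over the number of summands yields
`E|Y₁ + ⋯ + Yₙ|^p ≤ 2 n E|Y|^p` (`sum_moment`), and dividing by `m^p` gives the claim.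
-/

open MeasureTheory

lemma clarkson_scalar {p : ℝ} (hp1 : 1 ≤ p) (hp2 : p ≤ 2) (a b : ℝ) :
    |a + b| ^ p + |a - b| ^ p ≤ 2 * |a| ^ p + 2 * |b| ^ p := by
  have key : ∀ x : ℝ, |x| ^ p = (x ^ 2) ^ (p / 2) := by
    intro x
    rw [← sq_abs, ← Real.rpow_natCast_mul (abs_nonneg x)]
    congr 1
    push_cast
    ring
  have hq0 : 0 ≤ p / 2 := by linarith
  have hq1 : p / 2 ≤ 1 := by linarith
  -- With `q = p / 2 ≤ 1`, the map `t ↦ t ^ q` is concave and subadditive; concavity is used at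
  -- the points `(a ± b) ^ 2`, whose midpoint is `a ^ 2 + b ^ 2`.
  have hconc := (Real.concaveOn_rpow hq0 hq1).2 (Set.mem_Ici.2 (sq_nonneg (a + b)))
    (Set.mem_Ici.2 (sq_nonneg (a - b))) (by norm_num : (0 : ℝ) ≤ 1 / 2)
    (by norm_num : (0 : ℝ) ≤ 1 / 2) (by norm_num)
  have hsub := Real.rpow_add_le_add_rpow (sq_nonneg a) (sq_nonneg b) hq0 hq1
  have hmid : (1 / 2 : ℝ) * (a + b) ^ 2 + 1 / 2 * (a - b) ^ 2 = a ^ 2 + b ^ 2 := by ring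
  simp only [smul_eq_mul] at hconc
  rw [hmid] at hconc
  rw [key, key, key, key]
  linarith

lemma abs_add_rpow_le {p : ℝ} (hp1 : 1 ≤ p) (hp2 : p ≤ 2) (a b : ℝ) :
    |a + b| ^ p ≤ 2 * |a| ^ p + 2 * |b| ^ p := by
  have h := clarkson_scalar hp1 hp2 a b
  have h' : 0 ≤ |a - b| ^ p := by positivity
  linarith

/-- Adding an independent centred variable to the constant `a` raises the `p`-th absolute moment
by at most twice the central moment. -/
lemma one_step (𝒟 : Measure ℝ) [IsProbabilityMeasure 𝒟] {p : ℝ} (hp1 : 1 ≤ p) (hp2 : p ≤ 2)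
    (hint : Integrable (fun x => x) 𝒟)
    (hvint : Integrable (fun x => |x - ∫ y, y ∂𝒟| ^ p) 𝒟) (a : ℝ) :
    ∫ x, |a + (x - ∫ y, y ∂𝒟)| ^ p ∂𝒟 ≤ |a| ^ p + 2 * ∫ x, |x - ∫ y, y ∂𝒟| ^ p ∂𝒟 := by
  set c := ∫ y, y ∂𝒟 with hc
  have hp0 : 0 ≤ p := by linarith
  have hbound : Integrable (fun x => 2 * |a| ^ p + 2 * |x - c| ^ p) 𝒟 :=
    (integrable_const _).add (hvint.const_mul 2)
  have hplus : Integrable (fun x => |a + (x - c)| ^ p) 𝒟 := by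
    refine hbound.mono' (by fun_prop (disch := assumption)) (Filter.Eventually.of_forall fun x => ?_)
    rw [Real.norm_of_nonneg (by positivity)]
    exact abs_add_rpow_le hp1 hp2 _ _
  have hminus : Integrable (fun x => |a - (x - c)| ^ p) 𝒟 := by
    refine hbound.mono' (by fun_prop (disch := assumption)) (Filter.Eventually.of_forall fun x => ?_)
    rw [Real.norm_of_nonneg (by positivity)]
    have h := abs_add_rpow_le hp1 hp2 a (-(x - c))
    rwa [abs_neg, ← sub_eq_add_neg] at h
  have hconv : ConvexOn ℝ Set.univ (fun x : ℝ => |x| ^ p) := by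
    refine ⟨convex_univ, fun x _ y _ s t hs ht hst => ?_⟩
    have h1 : |s • x + t • y| ≤ s • |x| + t • |y| := by
      simp only [smul_eq_mul]
      calc |s * x + t * y| ≤ |s * x| + |t * y| := abs_add_le _ _
        _ = s * |x| + t * |y| := by rw [abs_mul, abs_mul, abs_of_nonneg hs, abs_of_nonneg ht]
    exact (Real.rpow_le_rpow (abs_nonneg _) h1 (by linarith)).trans
      ((convexOn_rpow hp1).2 (Set.mem_Ici.2 (abs_nonneg x)) (Set.mem_Ici.2 (abs_nonneg y))
        hs ht hst)
  have hsubint : Integrable (fun x => a - (x - c)) 𝒟 :=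
    (integrable_const a).sub (hint.sub (integrable_const c))
  have hcont : Continuous (fun x : ℝ => |x| ^ p) :=
    continuous_abs.rpow_const fun _ => Or.inr (by linarith)
  have hjensen := hconv.map_integral_le hcont.continuousOn isClosed_univ
    (Filter.Eventually.of_forall fun _ => Set.mem_univ _) hsubint hminus
  have hmean : ∫ x, (a - (x - c)) ∂𝒟 = a := by
    have hcint : Integrable (fun x => x - c) 𝒟 := hint.sub (integrable_const c)
    rw [integral_sub (integrable_const a) hcint, integral_sub hint (integrable_const c)]
    simp [← hc]
  rw [hmean] at hjensen
  have hmono := integral_mono (hplus.add hminus) hbound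
    (fun x => clarkson_scalar hp1 hp2 a (x - c))
  have hl : ∫ x, ((fun x => |a + (x - c)| ^ p) + fun x => |a - (x - c)| ^ p) x ∂𝒟
      = ∫ x, |a + (x - c)| ^ p ∂𝒟 + ∫ x, |a - (x - c)| ^ p ∂𝒟 := integral_add hplus hminus
  have hr : ∫ x, (2 * |a| ^ p + 2 * |x - c| ^ p) ∂𝒟
      = 2 * |a| ^ p + 2 * ∫ x, |x - c| ^ p ∂𝒟 := by
    rw [integral_add (integrable_const _) (hvint.const_mul 2)]
    simp only [integral_const, probReal_univ, one_smul, integral_const_mul]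
  rw [hl, hr] at hmono
  linarith

/-- Integrability is carried along because the induction step needs it for Fubini. -/
lemma sum_moment (𝒟 : Measure ℝ) [IsProbabilityMeasure 𝒟] {p : ℝ} (hp1 : 1 ≤ p) (hp2 : p ≤ 2)
    (hint : Integrable (fun x => x) 𝒟)
    (hvint : Integrable (fun x => |x - ∫ y, y ∂𝒟| ^ p) 𝒟) (n : ℕ) :
    Integrable (fun X : Fin n → ℝ => |∑ i, (X i - ∫ y, y ∂𝒟)| ^ p) (Measure.pi fun _ => 𝒟) ∧
    ∫ X : Fin n → ℝ, |∑ i, (X i - ∫ y, y ∂𝒟)| ^ p ∂(Measure.pi fun _ => 𝒟)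
      ≤ n * (2 * ∫ x, |x - ∫ y, y ∂𝒟| ^ p ∂𝒟) := by
  have hstep := one_step 𝒟 hp1 hp2 hint hvint
  set c := ∫ y, y ∂𝒟 with hc
  induction n with
  | zero =>
    have h0 : (0 : ℝ) ^ p = 0 := Real.zero_rpow (by linarith)
    simp [h0]
  | succ n ih =>
    obtain ⟨ihint, ihle⟩ := ih
    have hmp := measurePreserving_piFinSuccAbove (fun _ : Fin (n + 1) => 𝒟) 0
    let G : ℝ × (Fin n → ℝ) → ℝ := fun z => |(∑ i, (z.2 i - c)) + (z.1 - c)| ^ p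
    have hG : Integrable G (𝒟.prod (Measure.pi fun _ => 𝒟)) := by
      have hb : Integrable (fun z : ℝ × (Fin n → ℝ) =>
          2 * |∑ i, (z.2 i - c)| ^ p + 2 * |z.1 - c| ^ p) (𝒟.prod (Measure.pi fun _ => 𝒟)) :=
        ((ihint.comp_snd 𝒟).const_mul 2).add ((hvint.comp_fst _).const_mul 2)
      refine hb.mono' (by fun_prop) (Filter.Eventually.of_forall fun z => ?_)
      rw [Real.norm_of_nonneg (by positivity)]
      exact abs_add_rpow_le hp1 hp2 _ _
    have hcomp : (fun X : Fin (n + 1) → ℝ => |∑ i, (X i - c)| ^ p)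
        = G ∘ (MeasurableEquiv.piFinSuccAbove (fun _ => ℝ) 0) := by
      funext X
      simp only [G, Function.comp_apply, Fin.sum_univ_succ]
      rw [add_comm]
      rfl
    refine ⟨?_, ?_⟩
    · rw [hcomp]
      exact hmp.integrable_comp_of_integrable hG
    · have h1 : ∫ X : Fin (n + 1) → ℝ, |∑ i, (X i - c)| ^ p ∂(Measure.pi fun _ => 𝒟)
          = ∫ z, G z ∂(𝒟.prod (Measure.pi fun _ => 𝒟)) := by
        rw [hcomp]
        exact hmp.integral_comp' G
      rw [h1, integral_prod_symm _ hG]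
      calc ∫ X : Fin n → ℝ, ∫ x, G (x, X) ∂𝒟 ∂(Measure.pi fun _ => 𝒟)
          ≤ ∫ X : Fin n → ℝ, (|∑ i, (X i - c)| ^ p + 2 * ∫ x, |x - c| ^ p ∂𝒟)
              ∂(Measure.pi fun _ => 𝒟) :=
            integral_mono hG.integral_prod_right (ihint.add (integrable_const _))
              fun X => hstep (∑ i, (X i - c))
        _ = ∫ X : Fin n → ℝ, |∑ i, (X i - c)| ^ p ∂(Measure.pi fun _ => 𝒟)
              + 2 * ∫ x, |x - c| ^ p ∂𝒟 := by
            rw [integral_add ihint (integrable_const _)]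
            simp
        _ ≤ _ := by
            push_cast
            linarith

/-- Von Bahr–Esseen type inequality: for `1 ≤ p ≤ 2` and i.i.d. real random variables
`X₁, …, X_m` with distribution `𝒟`, mean `μ` and `p`-th central moment at most `v_p`,
the sample mean `μ̂` satisfies `E[|μ̂ - μ|^p] ≤ 2 v_p / m^{p-1}`. -/
theorem von_bahr_esseen_sample_mean
    (𝒟 : Measure ℝ) [IsProbabilityMeasure 𝒟]
    (p : ℝ) (hp1 : 1 ≤ p) (hp2 : p ≤ 2)
    (hint : Integrable (fun x => x) 𝒟)
    (v : ℝ)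
    (hvint : Integrable (fun x => |x - ∫ y, y ∂𝒟| ^ p) 𝒟)
    (hv : ∫ x, |x - ∫ y, y ∂𝒟| ^ p ∂𝒟 ≤ v)
    (m : ℕ) (hm : 0 < m) :
    ∫ X, |(∑ i, X i) / m - ∫ y, y ∂𝒟| ^ p ∂(Measure.pi fun _ : Fin m => 𝒟)
      ≤ 2 * v / (m : ℝ) ^ (p - 1) := by
  obtain ⟨-, hle⟩ := sum_moment 𝒟 hp1 hp2 hint hvint m
  set c := ∫ y, y ∂𝒟 with hc
  have hm' : (0 : ℝ) < m := by exact_mod_cast hm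
  have hpt : ∀ X : Fin m → ℝ,
      |(∑ i, X i) / m - c| ^ p = |∑ i, (X i - c)| ^ p / (m : ℝ) ^ p := by
    intro X
    have h : (∑ i, X i) / m - c = (∑ i, (X i - c)) / m := by
      simp only [Finset.sum_sub_distrib, Finset.sum_const, Finset.card_univ, Fintype.card_fin,
        nsmul_eq_mul]
      field_simp
    rw [h, abs_div, abs_of_pos hm', Real.div_rpow (abs_nonneg _) hm'.le]
  simp only [hpt]
  rw [integral_div, Real.rpow_sub_one hm'.ne', div_div_eq_mul_div]
  gcongr
  nlinarith
end

section
/- Let k ∈ ℕ, let 𝒟 be a distribution over ℝ^d with mean μ = E_{X∼𝒟}[X] and σ² = E_{X∼𝒟}[‖X − μ‖²] < ∞. Then the class ℱ_k of normalized k-means loss functions admits a 𝒟-discretization with threshold function κ₀(δ) = 2·8000²·ln(e/δ), threshold ε₀ = 1, and size function N(ε, m) = 8·(72·10⁴·8000·e/ε)^{140·k·d·ln(6k)}. -/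
/-!
Each normalized loss is put in a scale-free form. Write `σ² = E‖X - μ‖²` and
`D_Q² = σ² + E d(X,Q)²`. With `a = σ / D_Q ∈ (0, 1]`, `w_i = (Q_i - μ) / D_Q` and
`y = (x - μ) / σ`, the loss is `f_Q(x) = min_i 2 ‖a y - w_i‖²`. Averaging the triangle inequality
over `X ∼ 𝒟` shows that some center satisfies `‖w_i‖² ≤ 2`, so every term of the minimum may be
capped at `4 a² ‖y‖² + 8` (`iInf_eq_iInf_cappedLoss`). A minimum moves by at most the largest change
of its terms, so it is enough to discretize the capped loss of one center and take the product over
the `k` centers.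

*Probability.* By Markov's inequality a block has empirical second moment above `5000 σ²` with
probability at most `1/5000`. By Chernoff's bound and a union bound over the three samples, with
probability at least `1 - δ` at most `0.0008 κ` blocks of each sample are bad
(`measure_good_event`). All that follows is deterministic on the remaining blocks.

*One center.* Fix a resolution `θ` proportional to `ε`. The pair `(a, w)` receives a label
(`centerLabel`): `a` rounded to `θ`, the direction of `w` rounded to a `θ`-net of the unit ball, and,
if `‖w‖ ≤ 4`, also `‖w‖` rounded to `θ`. For `‖w‖ > 4` the norm ranges over an unbounded set. Put
`s = ‖w‖ / a`. A point with `‖y‖ ≤ s / 4` is so far from the center that the cap is attained, and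
for a point with `‖y‖ > s / θ` the center is negligible; in between, a relative accuracy `θ` for `s`
is enough. The label therefore records how much empirical mass, with weight `1 + ‖y‖²`, lies below
the radii `s / 4` and `s / θ`, rounded to a small multiple of `κ`, together with `⌊log s / θ⌋` modulo
a large integer. Two centers with the same label have capped losses within `340 θ (1 + ‖y‖²)`, except
on two spherical shells of small empirical mass (`cappedLoss_close_of_label_eq`), where the crude
bound `8 (1 + ‖y‖²)` is used.

*Counting.* The number of labels is finite and independent of `κ` and `m`. One `Q` is chosen for each
`k`-tuple of labels that occurs. Markov's inequality over the blocks shows that the shells spoil at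
most `0.0008 κ` blocks, and `3 · 0.0008 κ + 0.0008 κ = 2κ/625`
(`exists_discretization_of_good_blocks`). The bound for the number of labels is compared with the
required size in `size_bound`.
-/

open MeasureTheory

/-- Squared distance from a point `x` to the nearest of the `k` centers `Q`. -/
noncomputable def dQsq {d k : ℕ} (Q : Fin k → EuclideanSpace ℝ (Fin d))
    (x : EuclideanSpace ℝ (Fin d)) : ℝ :=
  ⨅ i, ‖x - Q i‖ ^ 2

/-- The normalized `k`-means loss `f_Q(x) = 2 d(x,Q)² / (σ² + E[d(X,Q)²])`. -/
noncomputable def normalizedKMeansLoss {d k : ℕ} (𝒟 : Measure (EuclideanSpace ℝ (Fin d)))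
    (Q : Fin k → EuclideanSpace ℝ (Fin d)) (x : EuclideanSpace ℝ (Fin d)) : ℝ :=
  2 * dQsq Q x / ((∫ y, ‖y - ∫ z, z ∂𝒟‖ ^ 2 ∂𝒟) + ∫ y, dQsq Q y ∂𝒟)

/-- The class `ℱ_k` of normalized `k`-means loss functions. -/
def kmeansClass (d k : ℕ) (𝒟 : Measure (EuclideanSpace ℝ (Fin d))) :
    Set (EuclideanSpace ℝ (Fin d) → ℝ) :=
  {f | ∃ Q : Fin k → EuclideanSpace ℝ (Fin d), f = normalizedKMeansLoss 𝒟 Q}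

/-- `ℱ` admits a `𝒟`-discretization with threshold function `κ₀`, threshold `ε₀` and
size function `N`. -/
def AdmitsDDiscretization {𝒳 : Type*} [MeasurableSpace 𝒳] (𝒟 : Measure 𝒳)
    [IsProbabilityMeasure 𝒟] (ℱ : Set (𝒳 → ℝ))
    (κ₀ : ℝ → ℝ) (ε₀ : ℝ) (N : ℝ → ℕ → ℝ) : Prop :=
  ∀ ε δ : ℝ, 0 < ε → ε < ε₀ → 0 < δ → δ < 1 → ∀ m κ : ℕ, 1 ≤ m → κ₀ δ ≤ (κ : ℝ) →
    ENNReal.ofReal (1 - δ) ≤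
      (Measure.pi fun _ : Fin 3 => Measure.pi fun _ : Fin κ => Measure.pi fun _ : Fin m => 𝒟)
        {X | ∃ F : Finset (𝒳 → ℝ), IsEpsDiscretization ε m κ X ℱ F ∧ (F.card : ℝ) ≤ N ε m}

/-! ### A volumetric net of the unit ball -/

section Net

variable {E : Type*} [NormedAddCommGroup E] [NormedSpace ℝ E] [FiniteDimensional ℝ E]

/-- Volume comparison: the balls of radius `δ / 2` around the points of `s` are disjoint and lie in the
ball of radius `1 + δ / 2`. -/
theorem card_le_of_separated_unit_ball {δ : ℝ} (hδ : 0 < δ) (s : Finset E)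
    (hs : ∀ c ∈ s, ‖c‖ ≤ 1) (h : ∀ c ∈ s, ∀ d ∈ s, c ≠ d → δ ≤ ‖c - d‖) :
    (s.card : ℝ) ≤ (1 + 2 / δ) ^ Module.finrank ℝ E := by
  borelize E
  let μ : Measure E := Measure.addHaar
  have hδ2 : 0 < δ / 2 := by positivity
  have hρ : 0 < 1 + δ / 2 := by positivity
  have hdisj : Set.Pairwise (s : Set E)
      (Function.onFun Disjoint fun c => Metric.ball (c : E) (δ / 2)) := by
    rintro c hc d hd hcd
    apply Metric.ball_disjoint_ball
    rw [dist_eq_norm]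
    linarith [h c hc d hd hcd]
  have hsub : (⋃ c ∈ s, Metric.ball (c : E) (δ / 2)) ⊆ Metric.ball (0 : E) (1 + δ / 2) := by
    refine Set.iUnion₂_subset fun x hx => ?_
    apply Metric.ball_subset_ball'
    rw [dist_zero_right]
    linarith [hs x hx]
  have I : (s.card : ENNReal) * ENNReal.ofReal ((δ / 2) ^ Module.finrank ℝ E)
        * μ (Metric.ball 0 1) ≤
      ENNReal.ofReal ((1 + δ / 2) ^ Module.finrank ℝ E) * μ (Metric.ball 0 1) := by
    calc _ = μ (⋃ c ∈ s, Metric.ball (c : E) (δ / 2)) := by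
          rw [measure_biUnion_finset hdisj fun c _ => measurableSet_ball]
          simp only [μ.addHaar_ball_of_pos _ hδ2]
          simp only [Finset.sum_const, nsmul_eq_mul, mul_assoc]
      _ ≤ μ (Metric.ball (0 : E) (1 + δ / 2)) := measure_mono hsub
      _ = _ := by simp only [μ.addHaar_ball_of_pos _ hρ]
  have J := (ENNReal.mul_le_mul_iff_left (Metric.measure_ball_pos μ (0 : E) zero_lt_one).ne'
    measure_ball_lt_top.ne).1 I
  have K := ENNReal.toReal_le_of_le_ofReal (by positivity) J
  rw [ENNReal.toReal_mul, ENNReal.toReal_natCast, ENNReal.toReal_ofReal (by positivity)] at K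
  have e : (1 + 2 / δ) = (1 + δ / 2) / (δ / 2) := by field_simp; ring
  rw [e, div_pow, le_div_iff₀ (by positivity)]
  exact K

/-- A quantizer of the unit ball: a maximal `θ / 2`-separated set `T`, and a map `c` sending each vector
of the ball to a point of `T` at distance less than `θ / 2`. -/
theorem exists_ball_quantizer {θ : ℝ} (hθ : 0 < θ) :
    ∃ (T : Finset E) (c : E → E), (T.card : ℝ) ≤ (1 + 4 / θ) ^ Module.finrank ℝ E ∧
      (∀ v, ‖v‖ ≤ 1 → c v ∈ T) ∧
      ∀ v v', ‖v‖ ≤ 1 → ‖v'‖ ≤ 1 → c v = c v' → ‖v - v'‖ ≤ θ := by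
  classical
  let p : ℕ → Prop := fun n => ∃ s : Finset E, s.card = n ∧ (∀ c ∈ s, ‖c‖ ≤ 1) ∧
    ∀ c ∈ s, ∀ d ∈ s, c ≠ d → θ / 2 ≤ ‖c - d‖
  have hbd : ∀ n, p n → n ≤ ⌊(1 + 4 / θ) ^ Module.finrank ℝ E⌋₊ := by
    rintro n ⟨s, rfl, h1, h2⟩
    apply Nat.le_floor
    have := card_le_of_separated_unit_ball (by positivity) s h1 h2
    have e : 2 / (θ / 2) = 4 / θ := by field_simp; ring
    rwa [e] at this
  have h0 : p 0 := ⟨∅, by simp⟩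
  obtain ⟨s, hs, h1, h2⟩ := Nat.findGreatest_spec (P := p) (Nat.zero_le _) h0
  have hmax : ∀ v, ‖v‖ ≤ 1 → ∃ c ∈ s, ‖v - c‖ < θ / 2 := by
    intro v hv
    by_contra! hcon
    have hvs : v ∉ s := fun hvs => by
      have := hcon v hvs
      simp at this; linarith
    have hp : p (s.card + 1) := by
      refine ⟨insert v s, Finset.card_insert_of_notMem hvs, ?_, ?_⟩
      · intro c hc
        rcases Finset.mem_insert.1 hc with rfl | hc
        exacts [hv, h1 c hc]
      · intro c hc d hd hcd
        rcases Finset.mem_insert.1 hc with hc' | hc' <;> rcases Finset.mem_insert.1 hd with hd' | hd'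
        · exact absurd (hc'.trans hd'.symm) hcd
        · rw [hc']; exact hcon d hd'
        · rw [norm_sub_rev, hd']; exact hcon c hc'
        · exact h2 c hc' d hd' hcd
    have hle := Nat.le_findGreatest (P := p) (m := s.card + 1) (hbd (s.card + 1) hp) hp
    exact absurd (hle.trans hs.ge) (by simp)
  refine ⟨s, fun v => if h : ∃ c ∈ s, ‖v - c‖ < θ / 2 then h.choose else 0, ?_, ?_, ?_⟩
  · exact (Nat.le_floor_iff (by positivity)).1 (hbd _ ⟨s, rfl, h1, h2⟩)
  · intro v hv
    have := hmax v hv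
    simp only [this, dite_true]
    exact this.choose_spec.1
  · intro v v' hv hv' e
    have a := hmax v hv
    have b := hmax v' hv'
    simp only [a, b, dite_true] at e
    have a' := a.choose_spec.2
    have b' := b.choose_spec.2
    rw [e] at a'
    have := norm_sub_le_norm_sub_add_norm_sub v b.choose v'
    rw [norm_sub_rev b.choose v'] at this
    linarith

end Net

/-! ### The capped loss of a single center -/

section Center

theorem abs_sq_sub_sq_le {a a' θ : ℝ} (ha : 0 ≤ a) (ha1 : a ≤ 1) (ha' : 0 ≤ a')
    (ha1' : a' ≤ 1) (h : |a - a'| ≤ θ) : |a ^ 2 - a' ^ 2| ≤ 2 * θ := by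
  have : a ^ 2 - a' ^ 2 = (a - a') * (a + a') := by ring
  rw [this, abs_mul, abs_of_nonneg (by linarith : 0 ≤ a + a')]
  nlinarith [abs_nonneg (a - a')]

theorem abs_cap_sub_le {E : Type*} [NormedAddCommGroup E] {a a' θ : ℝ} (ha : 0 ≤ a) (ha1 : a ≤ 1) (ha' : 0 ≤ a')
    (ha1' : a' ≤ 1) (h : |a - a'| ≤ θ) (y : E) :
    |(4 * a ^ 2 * ‖y‖ ^ 2 + 8) - (4 * a' ^ 2 * ‖y‖ ^ 2 + 8)| ≤ 8 * θ * ‖y‖ ^ 2 := by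
  have : (4 * a ^ 2 * ‖y‖ ^ 2 + 8) - (4 * a' ^ 2 * ‖y‖ ^ 2 + 8)
    = 4 * ((a ^ 2 - a' ^ 2) * ‖y‖ ^ 2) := by ring
  rw [this, abs_mul, abs_mul, abs_of_nonneg (sq_nonneg ‖y‖), abs_of_pos (by norm_num : (0:ℝ) < 4)]
  nlinarith [mul_le_mul_of_nonneg_right (abs_sq_sub_sq_le ha ha1 ha' ha1' h) (sq_nonneg ‖y‖)]

theorem abs_norm_sq_sub_le {E : Type*} [NormedAddCommGroup E] (b b' : E) :
    |‖b‖ ^ 2 - ‖b'‖ ^ 2| ≤ ‖b - b'‖ * (‖b‖ + ‖b'‖) := by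
  have : ‖b‖ ^ 2 - ‖b'‖ ^ 2 = (‖b‖ - ‖b'‖) * (‖b‖ + ‖b'‖) := by ring
  rw [this, abs_mul, abs_of_nonneg (by positivity : 0 ≤ ‖b‖ + ‖b'‖)]
  exact mul_le_mul_of_nonneg_right (abs_norm_sub_norm_le b b') (by positivity)

variable {E : Type*} [NormedAddCommGroup E] [NormedSpace ℝ E]

/-- The contribution of one center `w` to the loss at `y`, at scale `a`, capped by an envelope that
depends only on `a` and `‖y‖`. The cap makes far away centers irrelevant for small `y`. -/
noncomputable def cappedLoss (a : ℝ) (w y : E) : ℝ :=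
  min (4 * a ^ 2 * ‖y‖ ^ 2 + 8) (2 * ‖a • y - w‖ ^ 2)

theorem cappedLoss_nonneg (a : ℝ) (w y : E) : 0 ≤ cappedLoss a w y :=
  le_min (by positivity) (by positivity)

theorem abs_cappedLoss_sub_le_crude {a a' : ℝ} (ha : 0 ≤ a) (ha1 : a ≤ 1) (ha' : 0 ≤ a')
    (ha1' : a' ≤ 1) (w w' y : E) :
    |cappedLoss a w y - cappedLoss a' w' y| ≤ 8 * (1 + ‖y‖ ^ 2) := by
  have key : ∀ {b : ℝ} (u : E), 0 ≤ b → b ≤ 1 → cappedLoss b u y ≤ 8 * (1 + ‖y‖ ^ 2) := by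
    intro b u hb hb1
    refine (min_le_left _ _).trans ?_
    have : b ^ 2 ≤ 1 := by nlinarith
    nlinarith [sq_nonneg ‖y‖, mul_le_mul_of_nonneg_right this (sq_nonneg ‖y‖)]
  rw [abs_le]
  constructor <;>
    linarith [cappedLoss_nonneg a w y, cappedLoss_nonneg a' w' y, key w ha ha1, key w' ha' ha1']

theorem norm_smul_sub_smul_le {r r' : ℝ} (v v' : E) (hr : 0 ≤ r) (hv' : ‖v'‖ ≤ 1) :
    ‖r • v - r' • v'‖ ≤ |r - r'| + r * ‖v - v'‖ := by
  have : r • v - r' • v' = (r - r') • v' + r • (v - v') := by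
    rw [sub_smul, smul_sub]; abel
  rw [this]
  refine (norm_add_le _ _).trans ?_
  rw [norm_smul, norm_smul, Real.norm_eq_abs, Real.norm_eq_abs, abs_of_nonneg hr]
  have := abs_nonneg (r - r')
  nlinarith [norm_nonneg v]

/-- Stability for centers of norm at most `4`, written in polar form `ρ • v`. -/
theorem cappedLoss_near {a a' θ ρ ρ' : ℝ} (ha : 0 ≤ a) (ha1 : a ≤ 1) (ha' : 0 ≤ a')
    (ha1' : a' ≤ 1) (h : |a - a'| ≤ θ) {v v' : E} (hv : ‖v‖ ≤ 1) (hv' : ‖v'‖ ≤ 1)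
    (hvv : ‖v - v'‖ ≤ θ) (hρ0 : 0 ≤ ρ) (hρ4 : ρ ≤ 4) (hρ0' : 0 ≤ ρ') (hρ4' : ρ' ≤ 4)
    (hρ : |ρ - ρ'| ≤ θ) (y : E) :
    |cappedLoss a (ρ • v) y - cappedLoss a' (ρ' • v') y| ≤ 340 * θ * (1 + ‖y‖ ^ 2) := by
  have hθ : 0 ≤ θ := (abs_nonneg _).trans h
  refine (abs_min_sub_min_le_max _ _ _ _).trans (max_le ?_ ?_)
  · refine (abs_cap_sub_le ha ha1 ha' ha1' h y).trans ?_
    nlinarith [mul_nonneg hθ (sq_nonneg ‖y‖)]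
  · rw [← mul_sub, abs_mul, abs_of_pos (by norm_num : (0:ℝ) < 2)]
    have h1 := abs_norm_sq_sub_le (a • y - ρ • v) (a' • y - ρ' • v')
    have h2 : ‖(a • y - ρ • v) - (a' • y - ρ' • v')‖ ≤ θ * (‖y‖ + 5) := by
      have e : (a • y - ρ • v) - (a' • y - ρ' • v') = (a - a') • y - (ρ • v - ρ' • v') := by
        rw [sub_smul]; abel
      rw [e]
      refine (norm_sub_le _ _).trans ?_
      rw [norm_smul, Real.norm_eq_abs]
      have := norm_smul_sub_smul_le (r := ρ) (r' := ρ') v v' hρ0 hv'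
      nlinarith [norm_nonneg y, norm_nonneg (v - v'), mul_le_mul_of_nonneg_right h (norm_nonneg y)]
    have h3 : ∀ {b r : ℝ} {u : E}, 0 ≤ b → b ≤ 1 → 0 ≤ r → r ≤ 4 → ‖u‖ ≤ 1 →
        ‖b • y - r • u‖ ≤ ‖y‖ + 4 := by
      intro b r u hb hb1 hr hr4 hu
      refine (norm_sub_le _ _).trans ?_
      rw [norm_smul, norm_smul, Real.norm_eq_abs, Real.norm_eq_abs, abs_of_nonneg hb,
        abs_of_nonneg hr]
      nlinarith [norm_nonneg y, norm_nonneg u]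
    have h4 := h3 ha ha1 hρ0 hρ4 hv
    have h5 := h3 ha' ha1' hρ0' hρ4' hv'
    have h6 : ‖(a • y - ρ • v) - (a' • y - ρ' • v')‖ *
        (‖a • y - ρ • v‖ + ‖a' • y - ρ' • v'‖) ≤ θ * (‖y‖ + 5) * (2 * (‖y‖ + 4)) :=
      mul_le_mul h2 (by linarith) (by positivity) (by positivity)
    have h7 : (‖y‖ + 5) * (2 * (‖y‖ + 4)) ≤ 170 * (1 + ‖y‖ ^ 2) := by
      nlinarith [sq_nonneg (‖y‖ - 1)]
    nlinarith [mul_le_mul_of_nonneg_left h7 hθ]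

/-- A center `(a * s) • v` with `4 ≤ a * s` attains the cap at every point of norm at most `s / 4`. -/
theorem cappedLoss_eq_cap {a s : ℝ} (ha : 0 ≤ a) {v : E} (hv : ‖v‖ = 1) (has : 4 ≤ a * s)
    {y : E} (hy : ‖y‖ ≤ s / 4) :
    cappedLoss a ((a * s) • v) y = 4 * a ^ 2 * ‖y‖ ^ 2 + 8 := by
  apply min_eq_left
  have h1 : a * s - a * ‖y‖ ≤ ‖a • y - (a * s) • v‖ := by
    have := norm_sub_norm_le ((a * s) • v) (a • y)
    rw [norm_sub_rev, norm_smul, norm_smul, hv, Real.norm_eq_abs, Real.norm_eq_abs,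
      abs_of_nonneg ha, abs_of_nonneg (by linarith)] at this
    linarith
  have h2 : a * ‖y‖ ≤ a * s / 4 := by nlinarith
  have h0 : 0 ≤ a * ‖y‖ := by positivity
  have h3 : (3 / 4 * (a * s)) ^ 2 ≤ ‖a • y - (a * s) • v‖ ^ 2 :=
    pow_le_pow_left₀ (by linarith) (by linarith) 2
  have h4 : 4 * a ^ 2 * ‖y‖ ^ 2 = 4 * (a * ‖y‖) ^ 2 := by ring
  rw [h4]
  nlinarith

/-- Stability for centers of norm at least `4`, written as `(a * s) • v`. Closeness of `s` and `s'` on the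
logarithmic scale is required only if their ratio is below `4 / θ`: otherwise no `y` lies in both
ranges `(s / 4, s / θ]` and `(s' / 4, s' / θ]`, and the hypotheses on `y` put it below both
ranges, where the cap is attained, or above both, where the centers are negligible. -/
theorem cappedLoss_far {a a' θ s s' : ℝ} (ha : 0 ≤ a) (ha1 : a ≤ 1) (ha' : 0 ≤ a')
    (ha1' : a' ≤ 1) (h : |a - a'| ≤ θ) (hθ0 : 0 < θ) (hθ1 : θ ≤ 1) {v v' : E}
    (hv : ‖v‖ = 1) (hv' : ‖v'‖ = 1) (hvv : ‖v - v'‖ ≤ θ)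
    (hs : 0 < s) (hs' : 0 < s') (has : 4 ≤ a * s) (has' : 4 ≤ a' * s')
    (hlog : s' < 4 / θ * s → s < 4 / θ * s' → |Real.log s - Real.log s'| ≤ θ) (y : E)
    (hy1 : ‖y‖ ≤ s / 4 ↔ ‖y‖ ≤ s' / 4) (hy2 : ‖y‖ ≤ s / θ ↔ ‖y‖ ≤ s' / θ) :
    |cappedLoss a ((a * s) • v) y - cappedLoss a' ((a' * s') • v') y|
      ≤ 340 * θ * (1 + ‖y‖ ^ 2) := by
  have hyy := mul_nonneg hθ0.le (sq_nonneg ‖y‖)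
  have hcap := abs_cap_sub_le ha ha1 ha' ha1' h y
  by_cases c1 : ‖y‖ ≤ s / 4
  · rw [cappedLoss_eq_cap ha hv has c1, cappedLoss_eq_cap ha' hv' has' (hy1.1 c1)]
    nlinarith
  have c1' := mt hy1.2 c1
  refine (abs_min_sub_min_le_max _ _ _ _).trans (max_le (by nlinarith) ?_)
  have e1 : ∀ (b t : ℝ) (u : E), 2 * ‖b • y - (b * t) • u‖ ^ 2 = 2 * b ^ 2 * ‖y - t • u‖ ^ 2 := by
    intro b t u
    rw [mul_smul, ← smul_sub, norm_smul, mul_pow, Real.norm_eq_abs, sq_abs]; ring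
  rw [e1, e1]
  have ha2 := abs_sq_sub_sq_le ha ha1 ha' ha1' h
  have ha2' : a' ^ 2 ≤ 1 := by nlinarith
  -- it suffices to compare the two squared distances
  have split : ∀ {C D : ℝ}, ‖y - s • v‖ ^ 2 ≤ C * ‖y‖ ^ 2 →
      |‖y - s • v‖ ^ 2 - ‖y - s' • v'‖ ^ 2| ≤ D * θ * ‖y‖ ^ 2 →
      |2 * a ^ 2 * ‖y - s • v‖ ^ 2 - 2 * a' ^ 2 * ‖y - s' • v'‖ ^ 2|
        ≤ (4 * C + 2 * D) * (θ * ‖y‖ ^ 2) := by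
    intro C D hC hD
    have e : 2 * a ^ 2 * ‖y - s • v‖ ^ 2 - 2 * a' ^ 2 * ‖y - s' • v'‖ ^ 2
      = 2 * ((a ^ 2 - a' ^ 2) * ‖y - s • v‖ ^ 2)
        + 2 * (a' ^ 2 * (‖y - s • v‖ ^ 2 - ‖y - s' • v'‖ ^ 2)) := by ring
    rw [e]
    refine (abs_add_le _ _).trans ?_
    rw [abs_mul, abs_mul, abs_mul, abs_mul, abs_of_nonneg (sq_nonneg ‖y - s • v‖),
      abs_of_nonneg (sq_nonneg a'), abs_of_pos (by norm_num : (0:ℝ) < 2)]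
    have t1 := mul_le_mul ha2 hC (sq_nonneg _) (by positivity)
    have t2 := mul_le_mul ha2' hD (abs_nonneg _) (by norm_num)
    linarith
  push Not at c1 c1'
  have hy0 : 0 < ‖y‖ := by linarith
  have nsv : ‖s • v‖ = s := by rw [norm_smul, hv, Real.norm_eq_abs, abs_of_pos hs, mul_one]
  have nsv' : ‖s' • v'‖ = s' := by rw [norm_smul, hv', Real.norm_eq_abs, abs_of_pos hs', mul_one]
  have n1 : ‖y - s • v‖ ≤ ‖y‖ + s := (norm_sub_le _ _).trans (by rw [nsv])
  have n1' : ‖y - s' • v'‖ ≤ ‖y‖ + s' := (norm_sub_le _ _).trans (by rw [nsv'])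
  have bound5 : ‖y - s • v‖ ^ 2 ≤ 25 * ‖y‖ ^ 2 := by
    have : ‖y - s • v‖ ≤ 5 * ‖y‖ := by linarith
    nlinarith [norm_nonneg (y - s • v)]
  have h1 := abs_norm_sq_sub_le (y - s • v) (y - s' • v')
  have hdiff : ‖(y - s • v) - (y - s' • v')‖ ≤ 12 * θ * ‖y‖ := by
    have e : (y - s • v) - (y - s' • v') = -(s • v - s' • v') := by abel
    rw [e, norm_neg]
    by_cases c2 : ‖y‖ ≤ s / θ
    · have c2' := hy2.1 c2
      have l := hlog
        (by
          have : 4 / θ * s = 4 * (s / θ) := by ring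
          linarith)
        (by
          have : 4 / θ * s' = 4 * (s' / θ) := by ring
          linarith)
      have hss : |s - s'| ≤ 2 * θ * s := by
        have e2 : s' = s * Real.exp (Real.log s' - Real.log s) := by
          rw [Real.exp_sub, Real.exp_log hs, Real.exp_log hs']; field_simp
        have habs := Real.abs_exp_sub_one_le (x := Real.log s' - Real.log s)
          (by rw [abs_sub_comm]; linarith)
        have : |s - s'| = s * |Real.exp (Real.log s' - Real.log s) - 1| := by
          rw [abs_sub_comm]
          nth_rw 1 [e2]
          rw [← mul_sub_one, abs_mul, abs_of_pos hs]
        rw [this]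
        rw [abs_sub_comm] at l
        nlinarith
      refine (norm_smul_sub_smul_le v v' hs.le hv'.le).trans ?_
      nlinarith
    · -- both centers have norm less than `θ ‖y‖` after division by the scale
      have c2' := mt hy2.2 c2
      push Not at c2 c2'
      rw [div_lt_iff₀ hθ0] at c2 c2'
      refine (norm_sub_le _ _).trans ?_
      rw [nsv, nsv']
      nlinarith
  have h2 : |‖y - s • v‖ ^ 2 - ‖y - s' • v'‖ ^ 2| ≤ 120 * θ * ‖y‖ ^ 2 := by
    refine h1.trans ?_
    have : ‖(y - s • v) - (y - s' • v')‖ * (‖y - s • v‖ + ‖y - s' • v'‖)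
      ≤ (12 * θ * ‖y‖) * (10 * ‖y‖) :=
      mul_le_mul hdiff (by linarith) (by positivity) (by positivity)
    nlinarith
  have := split bound5 h2
  nlinarith

end Center

/-! ### Labels of centers -/

theorem abs_sub_le_of_floor_eq {x x' θ : ℝ} (hθ : 0 < θ) (hx : 0 ≤ x) (hx' : 0 ≤ x')
    (h : ⌊x / θ⌋₊ = ⌊x' / θ⌋₊) : |x - x'| ≤ θ := by
  have h1 := Nat.floor_le (div_nonneg hx hθ.le)
  have h2 := Nat.lt_floor_add_one (x / θ)
  have h1' := Nat.floor_le (div_nonneg hx' hθ.le)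
  have h2' := Nat.lt_floor_add_one (x' / θ)
  rw [h] at h1 h2
  rw [le_div_iff₀ hθ] at h1 h1'
  rw [div_lt_iff₀ hθ] at h2 h2'
  rw [abs_le]
  constructor <;> nlinarith

/-- Rounding modulo `K` loses nothing for numbers known to be within `(K - 1) * θ` of each other. -/
theorem abs_sub_le_of_floor_mod_eq {t t' θ : ℝ} {K : ℕ} (hθ : 0 < θ) (hK : 0 < K)
    (hd : |t - t'| ≤ (K - 1) * θ) (h : (⌊t / θ⌋ % K).toNat = (⌊t' / θ⌋ % K).toNat) :
    |t - t'| ≤ θ := by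
  have hK' : (K : ℤ) ≠ 0 := by exact_mod_cast hK.ne'
  have hmod : ⌊t / θ⌋ % K = ⌊t' / θ⌋ % K := by
    have p := Int.emod_nonneg ⌊t / θ⌋ hK'
    have p' := Int.emod_nonneg ⌊t' / θ⌋ hK'
    omega
  have h1 := Int.floor_le (t / θ)
  have h2 := Int.lt_floor_add_one (t / θ)
  have h1' := Int.floor_le (t' / θ)
  have h2' := Int.lt_floor_add_one (t' / θ)
  have hfl : ⌊t / θ⌋ = ⌊t' / θ⌋ := by
    obtain ⟨q, hq⟩ := Int.ModEq.dvd (n := (K : ℤ)) hmod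
    have hdd : |t / θ - t' / θ| ≤ K - 1 := by
      rw [← sub_div, abs_div, abs_of_pos hθ, div_le_iff₀ hθ]; exact hd
    rw [abs_le] at hdd
    have u : ((⌊t' / θ⌋ - ⌊t / θ⌋ : ℤ) : ℝ) < K := by push_cast; linarith
    have l : (-(K : ℤ) : ℝ) < ((⌊t' / θ⌋ - ⌊t / θ⌋ : ℤ) : ℝ) := by push_cast; linarith
    have u' : ⌊t' / θ⌋ - ⌊t / θ⌋ < (K : ℤ) := by exact_mod_cast u
    have l' : -(K : ℤ) < ⌊t' / θ⌋ - ⌊t / θ⌋ := by exact_mod_cast l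
    rw [hq] at u' l'
    have hKp : (0 : ℤ) < K := by exact_mod_cast hK
    have : q = 0 := by
      have q1 : q < 1 := by nlinarith
      have q2 : -1 < q := by nlinarith
      omega
    rw [this] at hq
    omega
  rw [hfl] at h1 h2
  rw [le_div_iff₀ hθ] at h1 h1'
  rw [div_lt_iff₀ hθ] at h2 h2'
  rw [abs_le]
  constructor <;> nlinarith

section Label

variable {E : Type*} [NormedAddCommGroup E] [NormedSpace ℝ E]

/-- The label of the center `w` at scale `a`. Its entries are `a` rounded to `θ`, the direction of `w`
quantized by `c`, a flag telling whether `‖w‖ ≤ 4`, and three further numbers. If `‖w‖ ≤ 4`, they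
encode `‖w‖` rounded to `θ`. Otherwise, with `s = ‖w‖ / a`, they are the values of the mass function
`Φ` at `s / 4` and `s / θ`, rounded to `η`, and `⌊log s / θ⌋` modulo `K`. For `w = 0` the direction is
the zero vector. -/
noncomputable def centerLabel (θ η : ℝ) (K : ℕ) (Φ : ℝ → ℝ) (c : E → E) (a : ℝ) (w : E) :
    ℕ × E × ℕ × ℕ × ℕ × ℕ :=
  (⌊a / θ⌋₊, c (‖w‖⁻¹ • w),
    if ‖w‖ ≤ 4 then (0, ⌊‖w‖ / θ⌋₊, 0, 0)
    else (1, ⌊Φ (‖w‖ / a / 4) / η⌋₊, ⌊Φ (‖w‖ / a / θ) / η⌋₊,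
      (⌊Real.log (‖w‖ / a) / θ⌋ % K).toNat))

theorem norm_inv_smul_le_one (w : E) : ‖‖w‖⁻¹ • w‖ ≤ 1 := by
  rw [norm_smul, norm_inv, norm_norm]
  exact inv_mul_le_one

open Classical in
/-- Centers with equal labels have close capped losses, except at points whose norm separates `r₁` from
`r₁'` or `r₂` from `r₂'`. These radii have nearly equal mass below them. -/
theorem cappedLoss_close_of_label_eq {θ η : ℝ} {K : ℕ} {Φ : ℝ → ℝ} {c : E → E}
    (hθ0 : 0 < θ) (hθ1 : θ ≤ 1) (hη : 0 < η) (hK : 4 / θ ≤ (K - 1) * θ) (hK0 : 0 < K)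
    (hΦ : ∀ r, 0 ≤ Φ r)
    (hc : ∀ v v', ‖v‖ ≤ 1 → ‖v'‖ ≤ 1 → c v = c v' → ‖v - v'‖ ≤ θ)
    {a a' : ℝ} (ha : 0 < a) (ha1 : a ≤ 1) (ha' : 0 < a') (ha1' : a' ≤ 1) {w w' : E}
    (h : centerLabel θ η K Φ c a w = centerLabel θ η K Φ c a' w') :
    ∃ r₁ r₁' r₂ r₂' : ℝ, |Φ r₁ - Φ r₁'| ≤ η ∧ |Φ r₂ - Φ r₂'| ≤ η ∧
      ∀ y : E, |cappedLoss a w y - cappedLoss a' w' y| ≤ 340 * θ * (1 + ‖y‖ ^ 2)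
        + (if ¬ (‖y‖ ≤ r₁ ↔ ‖y‖ ≤ r₁') then 8 * (1 + ‖y‖ ^ 2) else 0)
        + (if ¬ (‖y‖ ≤ r₂ ↔ ‖y‖ ≤ r₂') then 8 * (1 + ‖y‖ ^ 2) else 0) := by
  simp only [centerLabel, Prod.mk.injEq] at h
  obtain ⟨hA, hV, hR⟩ := h
  have hA := abs_sub_le_of_floor_eq hθ0 ha.le ha'.le hA
  have hV := hc _ _ (norm_inv_smul_le_one w) (norm_inv_smul_le_one w') hV
  have polar : ∀ u : E, ‖u‖ • (‖u‖⁻¹ • u) = u := by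
    intro u
    by_cases hu : u = 0
    · simp [hu]
    · rw [smul_smul, mul_inv_cancel₀ (norm_ne_zero_iff.2 hu), one_smul]
  by_cases hw : ‖w‖ ≤ 4 <;> by_cases hw' : ‖w'‖ ≤ 4 <;>
    simp only [hw, hw', if_true, if_false, Prod.mk.injEq] at hR
  · have hρ := abs_sub_le_of_floor_eq hθ0 (norm_nonneg w) (norm_nonneg w') hR.2.1
    refine ⟨0, 0, 0, 0, by simpa using hη.le, by simpa using hη.le, fun y => ?_⟩
    have := cappedLoss_near ha.le ha1 ha'.le ha1' hA (norm_inv_smul_le_one w)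
      (norm_inv_smul_le_one w') hV (norm_nonneg w) hw (norm_nonneg w') hw' hρ y
    rw [polar, polar] at this
    simpa using this
  · exact absurd hR.1 (by norm_num)
  · exact absurd hR.1 (by norm_num)
  · obtain ⟨-, h1, h2, h3⟩ := hR
    refine ⟨_, _, _, _, abs_sub_le_of_floor_eq hη (hΦ _) (hΦ _) h1,
      abs_sub_le_of_floor_eq hη (hΦ _) (hΦ _) h2, fun y => ?_⟩
    have W : 0 ≤ 8 * (1 + ‖y‖ ^ 2) := by positivity
    have T : 0 ≤ 340 * θ * (1 + ‖y‖ ^ 2) := by positivity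
    have crude := abs_cappedLoss_sub_le_crude ha.le ha1 ha'.le ha1' w w' y
    by_cases e1 : (‖y‖ ≤ ‖w‖ / a / 4 ↔ ‖y‖ ≤ ‖w'‖ / a' / 4)
    swap
    · rw [if_pos e1]; split_ifs <;> linarith
    by_cases e2 : (‖y‖ ≤ ‖w‖ / a / θ ↔ ‖y‖ ≤ ‖w'‖ / a' / θ)
    swap
    · rw [if_pos e2]; split_ifs <;> linarith
    rw [if_neg (not_not.2 e1), if_neg (not_not.2 e2), add_zero, add_zero]
    push Not at hw hw'
    have hw0 : 0 < ‖w‖ := by linarith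
    have hw0' : 0 < ‖w'‖ := by linarith
    have unit : ∀ u : E, 0 < ‖u‖ → ‖‖u‖⁻¹ • u‖ = 1 := by
      intro u hu
      rw [norm_smul, norm_inv, norm_norm, inv_mul_cancel₀ hu.ne']
    have as : a * (‖w‖ / a) = ‖w‖ := by field_simp
    have as' : a' * (‖w'‖ / a') = ‖w'‖ := by field_simp
    have hs : 0 < ‖w‖ / a := by positivity
    have hs' : 0 < ‖w'‖ / a' := by positivity
    have hlog : ‖w'‖ / a' < 4 / θ * (‖w‖ / a) → ‖w‖ / a < 4 / θ * (‖w'‖ / a') →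
        |Real.log (‖w‖ / a) - Real.log (‖w'‖ / a')| ≤ θ := by
      intro b1 b2
      refine abs_sub_le_of_floor_mod_eq hθ0 hK0 ?_ h3
      have g1 := Real.log_le_log hs' b1.le
      have g2 := Real.log_le_log hs b2.le
      rw [Real.log_mul (by positivity) hs.ne'] at g1
      rw [Real.log_mul (by positivity) hs'.ne'] at g2
      have g3 := Real.log_le_self (x := 4 / θ) (by positivity)
      rw [abs_le]
      constructor <;> linarith
    have := cappedLoss_far ha.le ha1 ha'.le ha1' hA hθ0 hθ1 (unit w hw0) (unit w' hw0') hV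
      hs hs' (by rw [as]; exact hw.le) (by rw [as']; exact hw'.le) hlog y e1 e2
    rw [as, as', polar, polar] at this
    exact this

end Label

/-! ### Representatives and the empirical radial mass -/

/-- If `L` takes values in the finite set `T`, at most `|T|` elements represent all fibers of `L`. -/
theorem exists_representatives {S τ : Type*} (L : S → τ) (T : Finset τ) (hT : ∀ s, L s ∈ T) :
    ∃ R : Finset S, R.card ≤ T.card ∧ ∀ s, ∃ t ∈ R, L s = L t := by
  classical
  by_cases hS : Nonempty S
  · refine ⟨T.image (Function.invFun L), Finset.card_image_le, fun s => ?_⟩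
    exact ⟨_, Finset.mem_image_of_mem _ (hT s), (Function.invFun_eq ⟨s, rfl⟩).symm⟩
  · exact ⟨∅, by simp, fun s => absurd ⟨s⟩ hS⟩

theorem abs_ciInf_sub_ciInf_le {k : ℕ} [NeZero k] {f g : Fin k → ℝ} {b : ℝ}
    (h : ∀ i, |f i - g i| ≤ b) : |(⨅ i, f i) - ⨅ i, g i| ≤ b := by
  have hf := Set.finite_range f |>.bddBelow
  have hg := Set.finite_range g |>.bddBelow
  have h1 : (⨅ i, f i) - b ≤ ⨅ i, g i :=
    le_ciInf fun i => by linarith [ciInf_le hf i, (abs_le.1 (h i)).2]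
  have h2 : (⨅ i, g i) - b ≤ ⨅ i, f i :=
    le_ciInf fun i => by linarith [ciInf_le hg i, (abs_le.1 (h i)).1]
  rw [abs_le]
  constructor <;> linarith

section Mass

variable {E : Type*} [NormedAddCommGroup E]
variable {κ m : ℕ}

open Classical in
/-- The empirical mass, with weight `1 + ‖y j‖²`, of the points of a block whose norm satisfies `A`. -/
noncomputable def blockMass (y : Fin m → E) (A : ℝ → Prop) : ℝ :=
  ∑ j, if A ‖y j‖ then (1 + ‖y j‖ ^ 2) / m else 0

theorem blockMass_nonneg (y : Fin m → E) (A : ℝ → Prop) : 0 ≤ blockMass y A := by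
  classical
  refine Finset.sum_nonneg fun j _ => ?_
  split_ifs <;> positivity

theorem blockMass_le (hm : 1 ≤ m) {C : ℝ} (y : Fin m → E) (A : ℝ → Prop)
    (h : ∑ j, ‖y j‖ ^ 2 / m ≤ C) : blockMass y A ≤ 1 + C := by
  classical
  have hm' : (0 : ℝ) < m := by exact_mod_cast hm
  calc blockMass y A ≤ ∑ j, (1 + ‖y j‖ ^ 2) / m := by
        refine Finset.sum_le_sum fun j _ => ?_
        split_ifs
        · exact le_rfl
        · positivity
    _ = 1 + ∑ j, ‖y j‖ ^ 2 / m := by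
        simp only [add_div, Finset.sum_add_distrib]
        simp [hm'.ne']
    _ ≤ 1 + C := by linarith

/-- The weighted empirical mass of the closed ball of radius `r`, added over the three samples and over
the blocks in `J`. -/
noncomputable def radialMass (y : Fin 3 → Fin κ → Fin m → E) (J : Finset (Fin κ)) (r : ℝ) : ℝ :=
  ∑ i ∈ J, ∑ l, blockMass (y l i) (· ≤ r)

/-- The shell between the radii `r` and `r'` has mass at most the increment of `radialMass`. -/
theorem sum_blockMass_symmDiff_le (y : Fin 3 → Fin κ → Fin m → E) (J : Finset (Fin κ))
    (r r' : ℝ) :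
    ∑ i ∈ J, ∑ l, blockMass (y l i) (fun t => ¬ (t ≤ r ↔ t ≤ r'))
      ≤ |radialMass y J r - radialMass y J r'| := by
  classical
  wlog h : r' ≤ r generalizing r r'
  · have := this r' r (le_of_not_ge h)
    rw [abs_sub_comm] at this
    simpa only [iff_comm (a := (_ : ℝ) ≤ r)] using this
  refine le_trans (le_of_eq ?_) (le_abs_self _)
  simp only [radialMass, blockMass, ← Finset.sum_sub_distrib]
  refine Finset.sum_congr rfl fun i _ => Finset.sum_congr rfl fun l _ =>
    Finset.sum_congr rfl fun j _ => ?_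
  by_cases h1 : ‖y l i j‖ ≤ r'
  · simp [h1, h1.trans h]
  · by_cases h2 : ‖y l i j‖ ≤ r <;> simp [h1, h2]

theorem blockMass_eq_ite (y : Fin m → E) (A : ℝ → Prop) [∀ x, Decidable (A x)] :
    ∑ j, (if A ‖y j‖ then 8 * (1 + ‖y j‖ ^ 2) else 0) / (m : ℝ) = 8 * blockMass y A := by
  rw [blockMass, Finset.mul_sum]
  refine Finset.sum_congr rfl fun j _ => ?_
  split_ifs
  · ring
  · simp

end Mass

/-! ### Discretization on good blocks -/

section Deterministic

variable {E : Type*} [NormedAddCommGroup E] [NormedSpace ℝ E]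

/-- The term of a center with `‖w i‖² ≤ 2` is at most `4 a² ‖y‖² + 8`, so capping every term leaves
the minimum unchanged. -/
theorem iInf_eq_iInf_cappedLoss {k : ℕ} [NeZero k] {a : ℝ} (w : Fin k → E)
    (hw : ∃ i, ‖w i‖ ^ 2 ≤ 2) (y : E) :
    ⨅ i, 2 * ‖a • y - w i‖ ^ 2 = ⨅ i, cappedLoss a (w i) y := by
  have hb := Set.finite_range (fun i => 2 * ‖a • y - w i‖ ^ 2) |>.bddBelow
  have hb' := Set.finite_range (fun i => cappedLoss a (w i) y) |>.bddBelow
  apply le_antisymm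
  · refine le_ciInf fun i => le_min ?_ (ciInf_le hb i)
    obtain ⟨j, hj⟩ := hw
    refine (ciInf_le hb j).trans ?_
    have h1 := norm_sub_le (a • y) (w j)
    have h2 : ‖a • y‖ ^ 2 = a ^ 2 * ‖y‖ ^ 2 := by
      rw [norm_smul, mul_pow, Real.norm_eq_abs, sq_abs]
    have h3 := pow_le_pow_left₀ (norm_nonneg _) h1 2
    nlinarith [sq_nonneg (‖a • y‖ - ‖w j‖)]
  · exact le_ciInf fun i => (ciInf_le hb' i).trans (min_le_right _ _)

/-- The deterministic core. On the blocks of `J`, whose second moments are bounded, finitely many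
members of the family `S` approximate all of it, each outside a small set `I` of blocks. The
parameter `P` bounds every integer in a label and serves as the modulus for the logarithms. -/
theorem exists_discretization_of_good_blocks [FiniteDimensional ℝ E] {κ m k : ℕ} [NeZero k]
    {S : Type*} (a : S → ℝ) (w : S → Fin k → E) (ha : ∀ s, 0 < a s) (ha1 : ∀ s, a s ≤ 1)
    (hw : ∀ s, ∃ i, ‖w s i‖ ^ 2 ≤ 2)
    (hm : 1 ≤ m) (hκ : 0 < κ) {ε : ℝ} (hε0 : 0 < ε) (hε1 : ε < 1)
    (y : Fin 3 → Fin κ → Fin m → E) (J : Finset (Fin κ))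
    (hJ : ∀ i ∈ J, ∀ l, ∑ j, ‖y l i j‖ ^ 2 / m ≤ 5000)
    {P : ℕ} (hP : 10 ^ 15 * k / ε ^ 2 ≤ P) :
    ∃ R : Finset S,
      (R.card : ℝ) ≤ (2 * (P : ℝ) ^ 4 * (1 + 16 * 10 ^ 6 / ε) ^ Module.finrank ℝ E) ^ k ∧
      ∀ s, ∃ t ∈ R, ∃ I : Finset (Fin κ), (I.card : ℝ) ≤ 0.0008 * κ ∧
        ∀ i ∈ J, i ∉ I → ∀ l, ∑ j, |(⨅ c, 2 * ‖a s • y l i j - w s c‖ ^ 2)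
          - ⨅ c, 2 * ‖a t • y l i j - w t c‖ ^ 2| / (m : ℝ) ≤ ε := by
  classical
  have hm' : (0 : ℝ) < m := by exact_mod_cast hm
  have hκ' : (0 : ℝ) < κ := by exact_mod_cast hκ
  have hk1 : (1 : ℝ) ≤ k := by exact_mod_cast NeZero.one_le
  -- `θ` makes `340 θ · 5001 ≤ ε / 2`, where `5001` bounds the weighted mass of a block of `J`.
  -- `η` makes the `2k` shells, of mass `η` each, exceed `ε / 16` on at most `0.0008 κ` blocks.
  obtain ⟨θ, hθ⟩ : ∃ θ : ℝ, θ = ε / (4 * 10 ^ 6) := ⟨_, rfl⟩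
  obtain ⟨η, hη⟩ : ∃ η : ℝ, η = ε / (40000 * k) * κ := ⟨_, rfl⟩
  have hθ0 : 0 < θ := by rw [hθ]; positivity
  have hθ1 : θ ≤ 1 := by rw [hθ, div_le_one (by positivity)]; linarith
  have hη0 : 0 < η := by rw [hη]; positivity
  obtain ⟨T, c, hTcard, hcT, hc⟩ := exists_ball_quantizer (E := E) hθ0
  set Φ := radialMass y J with hΦdef
  have hΦ0 : ∀ r, 0 ≤ Φ r := fun r => Finset.sum_nonneg fun i _ => Finset.sum_nonneg fun l _ =>
    blockMass_nonneg _ _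
  have hΦle : ∀ r, Φ r ≤ 15003 * κ := by
    intro r
    have h1 : Φ r ≤ ∑ i ∈ J, (15003 : ℝ) := by
      refine Finset.sum_le_sum fun i hi => ?_
      have : ∑ l, blockMass (y l i) (· ≤ r) ≤ ∑ l : Fin 3, (5001 : ℝ) :=
        Finset.sum_le_sum fun l _ => (blockMass_le hm _ _ (hJ i hi l)).trans (by norm_num)
      refine this.trans ?_
      norm_num
    rw [Finset.sum_const, nsmul_eq_mul] at h1
    have h2 : (J.card : ℝ) ≤ κ := by exact_mod_cast (card_finset_fin_le J)
    nlinarith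
  -- `P` exceeds every natural number occurring in a label
  have hε2 : ε ^ 2 ≤ ε := by nlinarith
  have hε20 : 0 < ε ^ 2 := by positivity
  have hP1 : 10 ^ 15 * (k : ℝ) ≤ P * ε ^ 2 := by rwa [div_le_iff₀ hε20] at hP
  have hP0 : (0 : ℝ) ≤ P := Nat.cast_nonneg P
  have hP2 : 10 ^ 15 * (k : ℝ) ≤ P * ε := by nlinarith
  have hPa : ∀ x : ℝ, x ≤ 4 → ⌊x / θ⌋₊ < P := by
    intro x hx
    have : 1 ≤ P := by
      by_contra! h0
      have : P = 0 := by omega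
      rw [this] at hP1
      norm_num at hP1
      nlinarith
    rw [Nat.floor_lt' (by omega), hθ, div_lt_iff₀ (by positivity)]
    nlinarith
  have hP00 : P ≠ 0 := by
    have := hPa 0 (by norm_num)
    omega
  have hPΦ : ∀ r, ⌊Φ r / η⌋₊ < P := by
    intro r
    rw [Nat.floor_lt' hP00, div_lt_iff₀ hη0, hη]
    refine (hΦle r).trans_lt ?_
    have e : (P : ℝ) * (ε / (40000 * k) * κ) = (P * ε) / (40000 * k) * κ := by ring
    rw [e]
    refine mul_lt_mul_of_pos_right ?_ hκ'
    rw [lt_div_iff₀ (by positivity)]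
    nlinarith
  have hK : 4 / θ ≤ ((P : ℝ) - 1) * θ := by
    rw [div_le_iff₀ hθ0, hθ]
    have : ((P : ℝ) - 1) * (ε / (4 * 10 ^ 6)) * (ε / (4 * 10 ^ 6))
      = (P * ε ^ 2 - ε ^ 2) / (16 * 10 ^ 12) := by ring
    rw [this, le_div_iff₀ (by positivity)]
    nlinarith
  let U : Finset (ℕ × E × ℕ × ℕ × ℕ × ℕ) := Finset.range P ×ˢ T ×ˢ Finset.range 2 ×ˢ
    Finset.range P ×ˢ Finset.range P ×ˢ Finset.range P
  let L : S → Fin k → ℕ × E × ℕ × ℕ × ℕ × ℕ := fun s i => centerLabel θ η P Φ c (a s) (w s i)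
  have hL : ∀ s, L s ∈ Fintype.piFinset fun _ : Fin k => U := by
    intro s
    rw [Fintype.mem_piFinset]
    intro i
    simp only [L, U, centerLabel, Finset.mem_product, Finset.mem_range]
    refine ⟨hPa _ (by linarith [ha1 s]), hcT _ (norm_inv_smul_le_one _), ?_⟩
    have hP0' : 0 < P := Nat.pos_of_ne_zero hP00
    split_ifs with hwi
    · exact ⟨by norm_num, hPa _ hwi, hP0', hP0'⟩
    · refine ⟨by norm_num, hPΦ _, hPΦ _, ?_⟩
      have := Int.emod_lt_of_pos ⌊Real.log (‖w s i‖ / a s) / θ⌋ (by exact_mod_cast hP0' : (0:ℤ) < P)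
      dsimp only
      omega
  obtain ⟨R, hRcard, hR⟩ := exists_representatives L _ hL
  refine ⟨R, ?_, fun s => ?_⟩
  · refine (Nat.cast_le.2 hRcard).trans ?_
    rw [Fintype.card_piFinset_const]
    simp only [U, Finset.card_product, Finset.card_range]
    push_cast
    have e : 16 * 10 ^ 6 / ε = 4 / θ := by rw [hθ]; field_simp; norm_num
    rw [e]
    refine pow_le_pow_left₀ (by positivity) ?_ k
    calc (P : ℝ) * (T.card * (2 * (P * (P * P)))) = 2 * (P : ℝ) ^ 4 * T.card := by ring
      _ ≤ _ := mul_le_mul_of_nonneg_left hTcard (by positivity)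
  obtain ⟨t, htR, hst⟩ := hR s
  refine ⟨t, htR, ?_⟩
  have hcl : ∀ i, _ := fun i => cappedLoss_close_of_label_eq hθ0 hθ1 hη0 hK
    (Nat.pos_of_ne_zero hP00) hΦ0 hc (ha s) (ha1 s) (ha t) (ha1 t) (congrFun hst i)
  choose r₁ r₁' r₂ r₂' hr₁ hr₂ hbound using hcl
  let A₁ : Fin k → ℝ → Prop := fun c x => ¬ (x ≤ r₁ c ↔ x ≤ r₁' c)
  let A₂ : Fin k → ℝ → Prop := fun c x => ¬ (x ≤ r₂ c ↔ x ≤ r₂' c)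
  let M : Fin 3 → Fin κ → ℝ := fun l i =>
    ∑ c, (blockMass (y l i) (A₁ c) + blockMass (y l i) (A₂ c))
  have hM0 : ∀ l i, 0 ≤ M l i := fun l i => Finset.sum_nonneg fun c _ =>
    add_nonneg (blockMass_nonneg _ _) (blockMass_nonneg _ _)
  have hMtot : ∑ i ∈ J, ∑ l, M l i ≤ k * (2 * η) := by
    have e : ∑ i ∈ J, ∑ l, M l i = ∑ c, (∑ i ∈ J, ∑ l, blockMass (y l i) (A₁ c)
        + ∑ i ∈ J, ∑ l, blockMass (y l i) (A₂ c)) := by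
      simp only [M]
      rw [Finset.sum_congr rfl fun i _ => Finset.sum_comm, Finset.sum_comm]
      simp only [Finset.sum_add_distrib]
    rw [e]
    have : ∀ c ∈ (Finset.univ : Finset (Fin k)), (∑ i ∈ J, ∑ l, blockMass (y l i) (A₁ c)
        + ∑ i ∈ J, ∑ l, blockMass (y l i) (A₂ c)) ≤ 2 * η := by
      intro c _
      have h1 := (sum_blockMass_symmDiff_le y J (r₁ c) (r₁' c)).trans (hr₁ c)
      have h2 := (sum_blockMass_symmDiff_le y J (r₂ c) (r₂' c)).trans (hr₂ c)
      simp only [A₁, A₂]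
      linarith
    refine (Finset.sum_le_sum this).trans ?_
    simp
  -- the blocks on which the shells carry too much mass
  let I : Finset (Fin κ) := J.filter fun i => ε / 16 < ∑ l, M l i
  refine ⟨I, ?_, fun i hiJ hiI l => ?_⟩
  · have h1 : (I.card : ℝ) * (ε / 16) ≤ ∑ i ∈ I, ∑ l, M l i := by
      rw [← nsmul_eq_mul]
      exact Finset.card_nsmul_le_sum _ _ _ fun i hi => (Finset.mem_filter.1 hi).2.le
    have h2 : ∑ i ∈ I, ∑ l, M l i ≤ ∑ i ∈ J, ∑ l, M l i :=
      Finset.sum_le_sum_of_subset_of_nonneg (Finset.filter_subset _ _)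
        fun i _ _ => Finset.sum_nonneg fun l _ => hM0 l i
    have e : k * (2 * η) = (0.0008 * κ) * (ε / 16) := by
      rw [hη]; field_simp; norm_num
    have h3 := (h1.trans h2).trans (hMtot.trans_eq e)
    exact le_of_mul_le_mul_right h3 (by positivity)
  · have hMi : M l i ≤ ε / 16 := by
      have h1 : ∑ l, M l i ≤ ε / 16 := by
        by_contra! h
        exact hiI (Finset.mem_filter.2 ⟨hiJ, h⟩)
      exact (Finset.single_le_sum (fun l _ => hM0 l i) (Finset.mem_univ l)).trans h1
    have hpt : ∀ j, |(⨅ c, 2 * ‖a s • y l i j - w s c‖ ^ 2)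
          - ⨅ c, 2 * ‖a t • y l i j - w t c‖ ^ 2| / (m : ℝ) ≤
        340 * θ * ((1 + ‖y l i j‖ ^ 2) / m)
          + ∑ c, ((if A₁ c ‖y l i j‖ then 8 * (1 + ‖y l i j‖ ^ 2) else 0) / (m : ℝ)
            + (if A₂ c ‖y l i j‖ then 8 * (1 + ‖y l i j‖ ^ 2) else 0) / (m : ℝ)) := by
      intro j
      rw [iInf_eq_iInf_cappedLoss _ (hw s), iInf_eq_iInf_cappedLoss _ (hw t)]
      simp only [← add_div, ← Finset.sum_div, ← mul_div_assoc]
      refine div_le_div_of_nonneg_right (abs_ciInf_sub_ciInf_le fun c => ?_) hm'.le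
      refine (hbound c (y l i j)).trans ?_
      rw [add_assoc]
      refine add_le_add le_rfl ?_
      have := Finset.single_le_sum (f := fun c =>
        (if A₁ c ‖y l i j‖ then 8 * (1 + ‖y l i j‖ ^ 2) else 0)
            + (if A₂ c ‖y l i j‖ then 8 * (1 + ‖y l i j‖ ^ 2) else 0))
        (fun c _ => by split_ifs <;> positivity) (Finset.mem_univ c)
      exact this
    refine (Finset.sum_le_sum fun j _ => hpt j).trans ?_
    rw [Finset.sum_add_distrib, Finset.sum_comm, ← Finset.mul_sum]
    have h₁ := fun c => blockMass_eq_ite (y l i) (A₁ c)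
    have h₂ := fun c => blockMass_eq_ite (y l i) (A₂ c)
    simp only [Finset.sum_add_distrib (s := (Finset.univ : Finset (Fin m))), h₁, h₂]
    have h1 : ∑ j, (1 + ‖y l i j‖ ^ 2) / (m : ℝ) ≤ 5001 := by
      have := blockMass_le hm (y l i) (fun _ => True) (hJ i hiJ l)
      simp only [blockMass, if_true] at this
      linarith
    have h2 : ∑ c, (8 * blockMass (y l i) (A₁ c) + 8 * blockMass (y l i) (A₂ c)) = 8 * M l i := by
      simp only [M, Finset.mul_sum, mul_add]
    rw [h2]
    have h3 : 340 * θ * ∑ j, (1 + ‖y l i j‖ ^ 2) / (m : ℝ) ≤ 340 * θ * 5001 :=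
      mul_le_mul_of_nonneg_left h1 (by positivity)
    have h4 : 340 * θ * 5001 ≤ ε / 2 := by rw [hθ]; linarith
    linarith

end Deterministic

/-! ### The number of labels -/

/-- With `B = 72·10⁴·8000·e/ε` one has `P ≤ k B²` and `1 + 16·10⁶/ε ≤ B`, and `k ≤ B ^ log k`, so the
number of labels of a center is at most `B ^ (4 log k + 9 + d)`. -/
theorem size_bound {d k : ℕ} (hd : 1 ≤ d) (hk : 1 ≤ k) {ε : ℝ} (hε0 : 0 < ε) (hε1 : ε < 1) :
    (2 * ((⌈10 ^ 15 * (k : ℝ) / ε ^ 2⌉₊ : ℕ) : ℝ) ^ 4 * (1 + 16 * 10 ^ 6 / ε) ^ d) ^ k ≤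
      (72 * 10 ^ 4 * 8000 * Real.exp 1 / ε) ^
        (140 * (k : ℝ) * (d : ℝ) * Real.log (6 * (k : ℝ))) := by
  have hk1 : (1 : ℝ) ≤ k := by exact_mod_cast hk
  have hd1 : (1 : ℝ) ≤ d := by exact_mod_cast hd
  have he : (2 : ℝ) ≤ Real.exp 1 := by linarith [Real.add_one_le_exp 1]
  set B : ℝ := 72 * 10 ^ 4 * 8000 * Real.exp 1 / ε with hB
  have hBε : B * ε = 72 * 10 ^ 4 * 8000 * Real.exp 1 := by rw [hB]; field_simp
  have hBe : Real.exp 1 ≤ B := by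
    rw [hB, le_div_iff₀ hε0]; nlinarith
  have hB2 : 2 ≤ B := he.trans hBe
  have hB0 : 0 < B := by linarith
  have hε20 : 0 < ε ^ 2 := by positivity
  have hX : 1 ≤ 10 ^ 15 * (k : ℝ) / ε ^ 2 := by
    rw [le_div_iff₀ hε20]; nlinarith
  have hP : ((⌈10 ^ 15 * (k : ℝ) / ε ^ 2⌉₊ : ℕ) : ℝ) ≤ k * B ^ 2 := by
    refine (Nat.ceil_lt_add_one (by positivity)).le.trans ?_
    have h1 : 2 * (10 ^ 15 * (k : ℝ) / ε ^ 2) ≤ k * B ^ 2 := by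
      have : k * B ^ 2 = k * (72 * 10 ^ 4 * 8000 * Real.exp 1) ^ 2 / ε ^ 2 := by
        rw [hB, div_pow]; ring
      rw [this, ← mul_div_assoc]
      refine div_le_div_of_nonneg_right ?_ hε20.le
      have he2 : 4 ≤ Real.exp 1 ^ 2 := by nlinarith
      have hc : (2 : ℝ) * 10 ^ 15 ≤ (72 * 10 ^ 4 * 8000 * Real.exp 1) ^ 2 := by
        rw [mul_pow]; nlinarith
      nlinarith
    linarith
  have hT : 1 + 16 * 10 ^ 6 / ε ≤ B := by
    have : 1 + 16 * 10 ^ 6 / ε = (ε + 16 * 10 ^ 6) / ε := by field_simp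
    rw [this, hB]
    refine div_le_div_of_nonneg_right ?_ hε0.le
    nlinarith
  have hkB : (k : ℝ) ≤ B ^ Real.log k := by
    calc (k : ℝ) = Real.exp 1 ^ Real.log k := by
          rw [Real.exp_one_rpow, Real.exp_log (by linarith)]
      _ ≤ B ^ Real.log k :=
          Real.rpow_le_rpow (Real.exp_pos 1).le hBe (Real.log_nonneg hk1)
  have hL : Real.log k ≤ Real.log (6 * k) := Real.log_le_log (by linarith) (by linarith)
  have hL1 : 1 ≤ Real.log (6 * k) := by
    rw [Real.le_log_iff_exp_le (by linarith)]
    linarith [Real.exp_one_lt_d9]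
  have hL0 := Real.log_nonneg hk1
  have base : 2 * ((⌈10 ^ 15 * (k : ℝ) / ε ^ 2⌉₊ : ℕ) : ℝ) ^ 4 * (1 + 16 * 10 ^ 6 / ε) ^ d
      ≤ B ^ (4 * Real.log k + 9 + d) := by
    calc _ ≤ B * (B ^ Real.log k * B ^ 2) ^ 4 * B ^ d := by
          gcongr
          exact hP.trans (by gcongr)
      _ = B ^ (4 * Real.log k + 9 + d) := by
          rw [Real.rpow_add hB0, Real.rpow_add hB0, Real.rpow_natCast, mul_comm 4,
            Real.rpow_mul hB0.le]
          norm_cast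
          ring
  calc _ ≤ (B ^ (4 * Real.log k + 9 + d)) ^ k := by gcongr
    _ = B ^ ((4 * Real.log k + 9 + d) * k) := by
        rw [Real.rpow_mul hB0.le, Real.rpow_natCast]
    _ ≤ _ := by
        refine Real.rpow_le_rpow_of_exponent_le (by linarith) ?_
        have h1 : 4 * Real.log k + 9 + d ≤ 14 * (d * Real.log (6 * k)) := by
          have : Real.log (6 * k) ≤ d * Real.log (6 * k) := by nlinarith
          nlinarith
        have h2 : 0 ≤ d * Real.log (6 * k) := by positivity
        nlinarith [mul_le_mul_of_nonneg_right h1 (by linarith : (0:ℝ) ≤ k),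
          mul_nonneg h2 (by linarith : (0:ℝ) ≤ k)]

/-! ### Few blocks are bad -/

/-- Markov's inequality for the average of `φ` over a block. -/
theorem measureReal_block_bad_le {Ω : Type*} [MeasurableSpace Ω] (𝒟 : Measure Ω)
    [IsProbabilityMeasure 𝒟] {φ : Ω → ℝ} (hφ0 : ∀ x, 0 ≤ φ x) (hφ : Integrable φ 𝒟) {m : ℕ}
    (hm : 1 ≤ m) :
    (Measure.pi fun _ : Fin m => 𝒟).real {x | 5000 * ∫ z, φ z ∂𝒟 < ∑ j, φ (x j) / m} ≤ 1 / 5000 := by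
  have hm' : (m : ℝ) ≠ 0 := by positivity
  have hint : ∀ j : Fin m, Integrable (fun x : Fin m → Ω => φ (x j) / m)
      (Measure.pi fun _ : Fin m => 𝒟) := fun j =>
    ((measurePreserving_eval (fun _ : Fin m => 𝒟) j).integrable_comp_of_integrable hφ).div_const _
  have hZ : Integrable (fun x : Fin m → Ω => ∑ j, φ (x j) / m) (Measure.pi fun _ : Fin m => 𝒟) :=
    integrable_finsetSum _ fun j _ => hint j
  have hZ0 : ∀ x : Fin m → Ω, 0 ≤ ∑ j, φ (x j) / m := fun x =>
    Finset.sum_nonneg fun j _ => div_nonneg (hφ0 _) (Nat.cast_nonneg m)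
  have hEZ : ∫ x : Fin m → Ω, ∑ j, φ (x j) / m ∂(Measure.pi fun _ : Fin m => 𝒟) = ∫ z, φ z ∂𝒟 := by
    rw [integral_finsetSum _ fun j _ => hint j]
    have : ∀ j : Fin m, ∫ x : Fin m → Ω, φ (x j) / m ∂(Measure.pi fun _ : Fin m => 𝒟)
        = (∫ z, φ z ∂𝒟) / m := by
      intro j
      rw [integral_div]
      congr 1
      exact integral_comp_eval (μ := fun _ : Fin m => 𝒟) (i := j) hφ.aestronglyMeasurable
    simp only [this]
    simp
    field_simp
  have hv : 0 ≤ ∫ z, φ z ∂𝒟 := integral_nonneg hφ0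
  -- for `∫ φ = 0` Markov's inequality is empty, but the average of `φ` vanishes almost surely
  rcases hv.eq_or_lt with h0 | hpos
  · rw [← h0] at hEZ ⊢
    rw [integral_eq_zero_iff_of_nonneg hZ0 hZ] at hEZ
    have : (Measure.pi fun _ : Fin m => 𝒟) {x | 5000 * 0 < ∑ j, φ (x j) / (m : ℝ)} = 0 := by
      refine measure_mono_null (fun x hx => ?_) hEZ
      simp only [Set.mem_ofPred_eq, mul_zero] at hx
      exact hx.ne'
    rw [measureReal_def, this]
    norm_num
  · have h1 := mul_meas_ge_le_integral_of_nonneg (Filter.Eventually.of_forall hZ0) hZ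
      (5000 * ∫ z, φ z ∂𝒟)
    rw [hEZ] at h1
    have h2 : (Measure.pi fun _ : Fin m => 𝒟).real {x | 5000 * ∫ z, φ z ∂𝒟 < ∑ j, φ (x j) / m}
      ≤ (Measure.pi fun _ : Fin m => 𝒟).real {x | 5000 * ∫ z, φ z ∂𝒟 ≤ ∑ j, φ (x j) / m} :=
      measureReal_mono fun x hx => by
        simp only [Set.mem_ofPred_eq] at hx ⊢
        exact hx.le
    refine h2.trans ?_
    rw [le_div_iff₀ (by norm_num)]
    nlinarith

open Classical in
/-- Chernoff's bound: `exp` of the number of bad blocks has expectation at most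
`(1 + (e - 1)/5000)^κ ≤ exp (0.0004 κ)`. -/
theorem measureReal_card_bad_gt_le {α : Type*} [MeasurableSpace α] (ρ : Measure α)
    [IsProbabilityMeasure ρ] {B : Set α} (hB : MeasurableSet B) (hρ : ρ.real B ≤ 1 / 5000) (κ : ℕ) :
    (Measure.pi fun _ : Fin κ => ρ).real
        {x | 0.0008 * (κ : ℝ) < ((Finset.univ.filter fun i => x i ∈ B).card : ℝ)}
      ≤ Real.exp (-0.0004 * κ) := by
  let g : α → ℝ := fun x => if x ∈ B then Real.exp 1 else 1
  have hg : g = fun x => 1 + B.indicator (fun _ => Real.exp 1 - 1) x := by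
    funext x
    by_cases hx : x ∈ B <;> simp [g, hx]
  have hgi : Integrable g ρ := by
    rw [hg]
    exact (integrable_const _).add ((integrable_const _).indicator hB)
  have hEg : ∫ x, g x ∂ρ ≤ Real.exp 0.0004 := by
    rw [hg, integral_add (integrable_const _) ((integrable_const _).indicator hB),
      integral_indicator_const _ hB]
    simp only [integral_const, probReal_univ, smul_eq_mul, one_mul]
    have := Real.exp_one_lt_d9
    have h2 := Real.add_one_le_exp (0.0004 : ℝ)
    have h3 := Real.add_one_le_exp (1 : ℝ)
    have : ρ.real B * (Real.exp 1 - 1) ≤ 1 / 5000 * (Real.exp 1 - 1) :=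
      mul_le_mul_of_nonneg_right hρ (by linarith)
    linarith
  have hprod : ∀ x : Fin κ → α, ∏ i, g (x i)
      = Real.exp ((Finset.univ.filter fun i => x i ∈ B).card : ℝ) := by
    intro x
    simp only [g]
    rw [Finset.prod_ite, Finset.prod_const, Finset.prod_const_one, mul_one, ← Real.exp_nat_mul,
      mul_one]
  have hI := Integrable.fintype_prod (μ := fun _ : Fin κ => ρ) (f := fun _ : Fin κ => g)
    fun _ => hgi
  have hE := integral_fintype_prod_eq_prod (𝕜 := ℝ) (μ := fun _ : Fin κ => ρ)
    (fun _ : Fin κ => g)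
  simp only [hprod] at hI hE
  have hM := mul_meas_ge_le_integral_of_nonneg
    (Filter.Eventually.of_forall fun _ => (Real.exp_pos _).le) hI (Real.exp (0.0008 * κ))
  rw [hE, Finset.prod_const, Finset.card_univ, Fintype.card_fin] at hM
  have hpow : (∫ x, g x ∂ρ) ^ κ ≤ Real.exp (0.0004 * κ) := by
    refine (pow_le_pow_left₀ (integral_nonneg fun x => ?_) hEg κ).trans_eq ?_
    · simp only [g, Pi.zero_apply]; split_ifs <;> positivity
    · rw [← Real.exp_nat_mul, mul_comm]
  have hmono : (Measure.pi fun _ : Fin κ => ρ).real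
        {x | 0.0008 * (κ : ℝ) < ((Finset.univ.filter fun i => x i ∈ B).card : ℝ)}
      ≤ (Measure.pi fun _ : Fin κ => ρ).real {x | Real.exp (0.0008 * κ)
        ≤ Real.exp ((Finset.univ.filter fun i => x i ∈ B).card : ℝ)} :=
    measureReal_mono fun x hx => Real.exp_le_exp.2 (le_of_lt hx)
  have e : Real.exp (-0.0004 * κ) = Real.exp (0.0004 * κ) / Real.exp (0.0008 * κ) := by
    rw [← Real.exp_sub]; congr 1; ring
  rw [e, le_div_iff₀ (Real.exp_pos _), mul_comm]
  exact (mul_le_mul_of_nonneg_left hmono (Real.exp_pos _).le).trans (hM.trans hpow)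

theorem three_mul_exp_le {δ κ : ℝ} (hδ0 : 0 < δ) (hδ1 : δ < 1)
    (hκ : 2 * 8000 ^ 2 * Real.log (Real.exp 1 / δ) ≤ κ) : 3 * Real.exp (-0.0004 * κ) ≤ δ := by
  rw [Real.log_div (Real.exp_pos 1).ne' hδ0.ne', Real.log_exp] at hκ
  have hl := Real.log_neg hδ0 hδ1
  have h1 : Real.exp (-0.0004 * κ) ≤ Real.exp (Real.log δ - 2) :=
    Real.exp_le_exp.2 (by nlinarith)
  rw [Real.exp_sub, Real.exp_log hδ0] at h1
  have h2 := Real.add_one_le_exp (2 : ℝ)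
  have h3 : δ / Real.exp 2 ≤ δ / 3 := by gcongr; linarith
  linarith

open Classical in
/-- With probability at least `1 - δ`, in each of the three samples at most `0.0008 κ` blocks have an
average of `φ` above `5000` times its expectation. -/
theorem measure_good_event {Ω : Type*} [MeasurableSpace Ω] (𝒟 : Measure Ω)
    [IsProbabilityMeasure 𝒟] {φ : Ω → ℝ} (hφ0 : ∀ x, 0 ≤ φ x) (hφm : Measurable φ)
    (hφ : Integrable φ 𝒟) {m κ : ℕ} (hm : 1 ≤ m) {δ : ℝ} (hδ0 : 0 < δ) (hδ1 : δ < 1)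
    (hκ : 2 * 8000 ^ 2 * Real.log (Real.exp 1 / δ) ≤ κ) :
    ENNReal.ofReal (1 - δ) ≤
      (Measure.pi fun _ : Fin 3 => Measure.pi fun _ : Fin κ => Measure.pi fun _ : Fin m => 𝒟)
        {X | ∀ l, ((Finset.univ.filter fun i =>
          5000 * ∫ z, φ z ∂𝒟 < ∑ j, φ (X l i j) / m).card : ℝ) ≤ 0.0008 * κ} := by
  set B : Set (Fin m → Ω) := {x | 5000 * ∫ z, φ z ∂𝒟 < ∑ j, φ (x j) / m} with hBdef
  have hB : MeasurableSet B := measurableSet_lt measurable_const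
    (Finset.measurable_sum _ fun j _ => (hφm.comp (measurable_pi_apply j)).div_const _)
  set ν := Measure.pi fun _ : Fin κ => Measure.pi fun _ : Fin m => 𝒟 with hν
  have hbad := measureReal_card_bad_gt_le _ hB (measureReal_block_bad_le 𝒟 hφ0 hφ hm) κ
  set C : Set (Fin κ → Fin m → Ω) :=
    {x | 0.0008 * (κ : ℝ) < ((Finset.univ.filter fun i => x i ∈ B).card : ℝ)} with hC
  have hCm : MeasurableSet C := by
    refine measurableSet_lt measurable_const ?_
    have : (fun x : Fin κ → Fin m → Ω => ((Finset.univ.filter fun i => x i ∈ B).card : ℝ))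
        = fun x => ∑ i, B.indicator (fun _ => (1 : ℝ)) (x i) := by
      funext x
      rw [Finset.card_filter]
      push_cast
      rfl
    rw [this]
    exact Finset.measurable_sum _ fun i _ =>
      (measurable_const.indicator hB).comp (measurable_pi_apply i)
  set G : Set (Fin 3 → Fin κ → Fin m → Ω) := {X | ∀ l, ((Finset.univ.filter fun i =>
          5000 * ∫ z, φ z ∂𝒟 < ∑ j, φ (X l i j) / m).card : ℝ) ≤ 0.0008 * κ} with hG
  have hcov : (Measure.pi fun _ : Fin 3 => ν) Gᶜ ≤ ENNReal.ofReal δ := by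
    have hsub : Gᶜ ⊆ ⋃ l : Fin 3, Function.eval l ⁻¹' C := by
      intro X hX
      simp only [hG, Set.mem_compl_iff, Set.mem_ofPred_eq, not_forall, not_le] at hX
      obtain ⟨l, hl⟩ := hX
      exact Set.mem_iUnion.2 ⟨l, hl⟩
    refine (measure_mono hsub).trans ((measure_iUnion_fintype_le _ _).trans ?_)
    have hl : ∀ l : Fin 3, (Measure.pi fun _ : Fin 3 => ν) (Function.eval l ⁻¹' C) = ν C :=
      fun l => (measurePreserving_eval (fun _ : Fin 3 => ν) l).measure_preimage
        hCm.nullMeasurableSet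
    simp only [hl]
    rw [Finset.sum_const, Finset.card_univ, Fintype.card_fin, nsmul_eq_mul,
      ← ENNReal.ofReal_toReal (measure_ne_top ν C), ← ENNReal.ofReal_natCast,
      ← ENNReal.ofReal_mul (by positivity)]
    refine ENNReal.ofReal_le_ofReal (le_trans ?_ (three_mul_exp_le hδ0 hδ1 hκ))
    push_cast
    exact mul_le_mul_of_nonneg_left hbad (by norm_num)
  have huniv : 1 ≤ (Measure.pi fun _ : Fin 3 => ν) G + (Measure.pi fun _ : Fin 3 => ν) Gᶜ := by
    rw [← measure_univ (μ := Measure.pi fun _ : Fin 3 => ν), ← Set.union_compl_self G]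
    exact measure_union_le _ _
  rw [ENNReal.ofReal_sub _ hδ0.le, ENNReal.ofReal_one, tsub_le_iff_right]
  exact huniv.trans (add_le_add le_rfl hcov)

/-! ### Normalized `k`-means losses -/

section KMeans

variable {d k : ℕ}

theorem dQsq_nonneg (Q : Fin k → EuclideanSpace ℝ (Fin d)) (x : EuclideanSpace ℝ (Fin d)) :
    0 ≤ dQsq Q x :=
  Real.iInf_nonneg fun _ => sq_nonneg _

theorem dQsq_le (Q : Fin k → EuclideanSpace ℝ (Fin d)) (x : EuclideanSpace ℝ (Fin d)) (i : Fin k) :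
    dQsq Q x ≤ ‖x - Q i‖ ^ 2 :=
  ciInf_le (Set.finite_range _).bddBelow i

theorem exists_eq_dQsq [NeZero k] (Q : Fin k → EuclideanSpace ℝ (Fin d))
    (x : EuclideanSpace ℝ (Fin d)) : ∃ i, ‖x - Q i‖ ^ 2 = dQsq Q x :=
  exists_eq_ciInf_of_finite

theorem measurable_dQsq (Q : Fin k → EuclideanSpace ℝ (Fin d)) : Measurable (dQsq Q) :=
  Measurable.iInf fun i => ((measurable_id.sub_const (Q i)).norm.pow_const 2)

theorem dQsq_le_two_mul [NeZero k] (Q : Fin k → EuclideanSpace ℝ (Fin d))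
    (x y : EuclideanSpace ℝ (Fin d)) : dQsq Q x ≤ 2 * ‖y - x‖ ^ 2 + 2 * dQsq Q y := by
  obtain ⟨i, hi⟩ := exists_eq_dQsq Q y
  rw [← hi]
  refine (dQsq_le Q x i).trans ?_
  have h1 := norm_sub_le_norm_sub_add_norm_sub x y (Q i)
  rw [norm_sub_rev x y] at h1
  have h3 := pow_le_pow_left₀ (norm_nonneg _) h1 2
  nlinarith [sq_nonneg (‖y - x‖ - ‖y - Q i‖)]

theorem integrable_dQsq [NeZero k] {𝒟 : Measure (EuclideanSpace ℝ (Fin d))}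
    [IsProbabilityMeasure 𝒟] {μ : EuclideanSpace ℝ (Fin d)}
    (hσ : Integrable (fun x => ‖x - μ‖ ^ 2) 𝒟) (Q : Fin k → EuclideanSpace ℝ (Fin d)) :
    Integrable (dQsq Q) 𝒟 := by
  refine ((hσ.const_mul 2).add (integrable_const (2 * dQsq Q μ))).mono'
    (measurable_dQsq Q).aestronglyMeasurable (Filter.Eventually.of_forall fun x => ?_)
  rw [Real.norm_eq_abs, abs_of_nonneg (dQsq_nonneg Q x)]
  have := dQsq_le_two_mul Q x μ
  rwa [norm_sub_rev] at this

/-- Integrating `d(μ,Q)² ≤ 2‖x - μ‖² + 2 d(x,Q)²`: the center nearest to `μ` is within `√2` times the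
normalizing scale. -/
theorem dQsq_mean_le [NeZero k] {𝒟 : Measure (EuclideanSpace ℝ (Fin d))}
    [IsProbabilityMeasure 𝒟] {μ : EuclideanSpace ℝ (Fin d)}
    (hσ : Integrable (fun x => ‖x - μ‖ ^ 2) 𝒟) (Q : Fin k → EuclideanSpace ℝ (Fin d)) :
    dQsq Q μ ≤ 2 * ((∫ x, ‖x - μ‖ ^ 2 ∂𝒟) + ∫ x, dQsq Q x ∂𝒟) := by
  have hQ := integrable_dQsq hσ Q
  have h : ∫ _x, dQsq Q μ ∂𝒟 ≤ ∫ x, (2 * ‖x - μ‖ ^ 2 + 2 * dQsq Q x) ∂𝒟 :=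
    integral_mono (integrable_const _) ((hσ.const_mul 2).add (hQ.const_mul 2))
      fun x => dQsq_le_two_mul Q μ x
  rw [integral_add (hσ.const_mul 2) (hQ.const_mul 2), integral_const_mul, integral_const_mul] at h
  simp only [integral_const, probReal_univ, one_smul] at h
  linarith

/-- The scale-free form of the loss, with `D` the square root of the normalizing denominator. -/
theorem normalizedKMeansLoss_eq_iInf {𝒟 : Measure (EuclideanSpace ℝ (Fin d))}
    {μ : EuclideanSpace ℝ (Fin d)} (Q : Fin k → EuclideanSpace ℝ (Fin d))
    {σ D : ℝ} (hσ : 0 < σ) (hD : 0 < D)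
    (hDQ : D ^ 2 = (∫ y, ‖y - ∫ z, z ∂𝒟‖ ^ 2 ∂𝒟) + ∫ y, dQsq Q y ∂𝒟)
    (x : EuclideanSpace ℝ (Fin d)) :
    normalizedKMeansLoss 𝒟 Q x
      = ⨅ c, 2 * ‖(σ / D) • (σ⁻¹ • (x - μ)) - D⁻¹ • (Q c - μ)‖ ^ 2 := by
  have e : ∀ c, 2 * ‖(σ / D) • (σ⁻¹ • (x - μ)) - D⁻¹ • (Q c - μ)‖ ^ 2
      = 2 / D ^ 2 * ‖x - Q c‖ ^ 2 := by
    intro c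
    have e1 : (σ / D) • (σ⁻¹ • (x - μ)) - D⁻¹ • (Q c - μ) = D⁻¹ • (x - Q c) := by
      rw [smul_smul, show σ / D * σ⁻¹ = D⁻¹ by field_simp, ← smul_sub, sub_sub_sub_cancel_right]
    rw [e1, norm_smul, mul_pow, norm_inv, Real.norm_eq_abs, abs_of_pos hD]
    field_simp
  simp only [e]
  rw [← Real.mul_iInf_of_nonneg (by positivity), normalizedKMeansLoss, ← hDQ, dQsq]
  ring

end KMeans

open Classical in
/-- A discretization of the required size exists whenever at most `0.0008 κ` blocks of each sample
have empirical second moment above `5000 σ²`. -/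
theorem exists_kmeans_discretization (d k : ℕ)
    (𝒟 : Measure (EuclideanSpace ℝ (Fin d))) [IsProbabilityMeasure 𝒟]
    (hσ : Integrable (fun x => ‖x - ∫ z, z ∂𝒟‖ ^ 2) 𝒟) {ε : ℝ} (hε0 : 0 < ε) (hε1 : ε < 1)
    {m κ : ℕ} (hm : 1 ≤ m) (hκ : 0 < κ) (X : Fin 3 → Fin κ → Fin m → EuclideanSpace ℝ (Fin d))
    (hX : ∀ l, ((Finset.univ.filter fun i => 5000 * ∫ z, ‖z - ∫ z, z ∂𝒟‖ ^ 2 ∂𝒟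
        < ∑ j, ‖X l i j - ∫ z, z ∂𝒟‖ ^ 2 / m).card : ℝ) ≤ 0.0008 * κ) :
    ∃ F : Finset (EuclideanSpace ℝ (Fin d) → ℝ),
      IsEpsDiscretization ε m κ X (kmeansClass d k 𝒟) F ∧
      (F.card : ℝ) ≤ 8 * (72 * 10 ^ 4 * 8000 * Real.exp 1 / ε) ^
        (140 * (k : ℝ) * (d : ℝ) * Real.log (6 * (k : ℝ))) := by
  set μ := ∫ z, z ∂𝒟 with hμ
  have hκ' : (0 : ℝ) < κ := by exact_mod_cast hκ
  have hm' : (0 : ℝ) < m := by exact_mod_cast hm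
  have hN1 : 1 ≤ (72 * 10 ^ 4 * 8000 * Real.exp 1 / ε) ^
        (140 * (k : ℝ) * (d : ℝ) * Real.log (6 * (k : ℝ))) := by
    apply Real.one_le_rpow
    · rw [le_div_iff₀ hε0]
      linarith [Real.add_one_le_exp (1 : ℝ)]
    · rcases Nat.eq_zero_or_pos k with rfl | hk
      · simp
      · have : (1 : ℝ) ≤ k := by exact_mod_cast hk
        have := Real.log_nonneg (by linarith : (1 : ℝ) ≤ 6 * k)
        positivity
  -- with no centers, or in dimension zero, every loss vanishes identically
  have hzero : (∀ (Q : Fin k → EuclideanSpace ℝ (Fin d)) x, dQsq Q x = 0) →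
      ∃ F : Finset (EuclideanSpace ℝ (Fin d) → ℝ),
      IsEpsDiscretization ε m κ X (kmeansClass d k 𝒟) F ∧
      (F.card : ℝ) ≤ 8 * (72 * 10 ^ 4 * 8000 * Real.exp 1 / ε) ^
        (140 * (k : ℝ) * (d : ℝ) * Real.log (6 * (k : ℝ))) := by
    intro h
    refine ⟨{fun _ => 0}, ?_, by simp; linarith⟩
    rintro f ⟨Q, rfl⟩
    refine ⟨_, Finset.mem_singleton_self _, ∅, by simp; positivity, fun i _ l => ?_⟩
    simp [normalizedKMeansLoss, h, hε0.le]
  rcases Nat.eq_zero_or_pos k with hk | hk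
  · subst hk
    exact hzero fun Q x => Real.iInf_of_isEmpty _
  have : NeZero k := ⟨hk.ne'⟩
  rcases Nat.eq_zero_or_pos d with hd | hd
  · subst hd
    refine hzero fun Q x => le_antisymm ?_ (dQsq_nonneg Q x)
    have := dQsq_le Q x 0
    rwa [Subsingleton.elim (x - Q 0) 0, norm_zero, zero_pow two_ne_zero] at this
  -- the blocks whose empirical second moment exceeds `5000 σ²` in some sample
  let I₀ : Finset (Fin κ) := Finset.univ.biUnion fun l : Fin 3 =>
    Finset.univ.filter fun i => 5000 * ∫ z, ‖z - μ‖ ^ 2 ∂𝒟 < ∑ j, ‖X l i j - μ‖ ^ 2 / m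
  have hI₀ : (I₀.card : ℝ) ≤ 0.0024 * κ := by
    have h1 : (I₀.card : ℝ) ≤ ∑ l : Fin 3, ((Finset.univ.filter fun i =>
        5000 * ∫ z, ‖z - μ‖ ^ 2 ∂𝒟 < ∑ j, ‖X l i j - μ‖ ^ 2 / m).card : ℝ) := by
      exact_mod_cast Finset.card_biUnion_le
    refine h1.trans ((Finset.sum_le_sum fun l _ => hX l).trans ?_)
    rw [Finset.sum_const, Finset.card_univ, Fintype.card_fin, nsmul_eq_mul]
    norm_num
    linarith
  have hgood : ∀ i, i ∉ I₀ → ∀ l,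
      ∑ j, ‖X l i j - μ‖ ^ 2 / m ≤ 5000 * ∫ z, ‖z - μ‖ ^ 2 ∂𝒟 := by
    intro i hi l
    by_contra! hcon
    exact hi (Finset.mem_biUnion.2 ⟨l, Finset.mem_univ l, Finset.mem_filter.2
      ⟨Finset.mem_univ i, hcon⟩⟩)
  have hv : 0 ≤ ∫ z, ‖z - μ‖ ^ 2 ∂𝒟 := integral_nonneg fun _ => sq_nonneg _
  rcases hv.eq_or_lt with h0 | hpos
  · -- a point mass at `μ`: each loss equals `0` or `2` on every point of a good block
    refine ⟨{fun _ => 0, fun _ => 2}, ?_, ?_⟩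
    · rintro f ⟨Q, rfl⟩
      have hae : ∀ᵐ z ∂𝒟, z = μ := by
        have := (integral_eq_zero_iff_of_nonneg (fun _ => sq_nonneg _) hσ).1 h0.symm
        filter_upwards [this] with z hz
        simpa [sub_eq_zero] using hz
      have hint : ∫ y, dQsq Q y ∂𝒟 = dQsq Q μ := by
        rw [integral_congr_ae (g := fun _ => dQsq Q μ)
          (by filter_upwards [hae] with z hz; rw [hz])]
        simp
      have hXμ : ∀ i, i ∉ I₀ → ∀ l j, X l i j = μ := by
        intro i hi l j
        have h1 := hgood i hi l
        rw [← h0, mul_zero] at h1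
        have h2 := (Finset.single_le_sum (f := fun j => ‖X l i j - μ‖ ^ 2 / (m : ℝ))
          (fun j _ => by positivity) (Finset.mem_univ j)).trans h1
        rw [div_le_iff₀ hm', zero_mul] at h2
        have h3 : ‖X l i j - μ‖ = 0 := by
          have := le_antisymm h2 (sq_nonneg _)
          simpa using this
        exact sub_eq_zero.1 (norm_eq_zero.1 h3)
      have hfin : ∀ c : ℝ, normalizedKMeansLoss 𝒟 Q μ = c →
          ∃ I : Finset (Fin κ), (I.card : ℝ) ≤ 2 * κ / 625 ∧
          ∀ i : Fin κ, i ∉ I → ∀ l : Fin 3,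
            ∑ j : Fin m, |normalizedKMeansLoss 𝒟 Q (X l i j) - c| / m ≤ ε := by
        intro c hc
        refine ⟨I₀, by linarith, fun i hi l => ?_⟩
        simp [hXμ i hi l, hc, hε0.le]
      have hval : normalizedKMeansLoss 𝒟 Q μ = 2 * dQsq Q μ / dQsq Q μ := by
        rw [normalizedKMeansLoss, ← hμ, hint, ← h0, zero_add]
      by_cases hq : dQsq Q μ = 0
      · exact ⟨fun _ => 0, by simp, hfin 0 (by rw [hval, hq]; simp)⟩
      · exact ⟨fun _ => 2, by simp, hfin 2 (by rw [hval]; field_simp)⟩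
    · have : (({fun _ => 0, fun _ => 2} : Finset (EuclideanSpace ℝ (Fin d) → ℝ)).card : ℝ) ≤ 2 := by
        exact_mod_cast Finset.card_le_two
      linarith
  obtain ⟨σ, hσdef⟩ : ∃ σ : ℝ, σ = √(∫ z, ‖z - μ‖ ^ 2 ∂𝒟) := ⟨_, rfl⟩
  have hσ0 : 0 < σ := by rw [hσdef]; exact Real.sqrt_pos.2 hpos
  have hσ2 : σ ^ 2 = ∫ z, ‖z - μ‖ ^ 2 ∂𝒟 := by rw [hσdef, Real.sq_sqrt hv]
  obtain ⟨D, hDdef⟩ : ∃ D : (Fin k → EuclideanSpace ℝ (Fin d)) → ℝ,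
      D = fun Q => √((∫ z, ‖z - μ‖ ^ 2 ∂𝒟) + ∫ z, dQsq Q z ∂𝒟) := ⟨_, rfl⟩
  have hQ0 : ∀ Q : Fin k → EuclideanSpace ℝ (Fin d), 0 ≤ ∫ z, dQsq Q z ∂𝒟 :=
    fun Q => integral_nonneg (dQsq_nonneg Q)
  have hD0 : ∀ Q, 0 < D Q := fun Q => by
    rw [hDdef]; exact Real.sqrt_pos.2 (by linarith [hQ0 Q])
  have hD2 : ∀ Q, D Q ^ 2 = (∫ z, ‖z - μ‖ ^ 2 ∂𝒟) + ∫ z, dQsq Q z ∂𝒟 := fun Q => by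
    rw [hDdef]; exact Real.sq_sqrt (by linarith [hQ0 Q])
  have hσD : ∀ Q, σ / D Q ≤ 1 := fun Q => by
    rw [div_le_one (hD0 Q)]
    exact le_of_sq_le_sq (by rw [hD2, hσ2]; linarith [hQ0 Q]) (hD0 Q).le
  have hw : ∀ Q : Fin k → EuclideanSpace ℝ (Fin d), ∃ i, ‖(D Q)⁻¹ • (Q i - μ)‖ ^ 2 ≤ 2 := by
    intro Q
    obtain ⟨i, hi⟩ := exists_eq_dQsq Q μ
    refine ⟨i, ?_⟩
    have h1 := dQsq_mean_le hσ Q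
    rw [← hi, ← hD2] at h1
    rw [norm_smul, mul_pow, norm_inv, Real.norm_eq_abs, abs_of_pos (hD0 Q), norm_sub_rev, inv_pow,
      inv_mul_le_iff₀ (pow_pos (hD0 Q) 2)]
    linarith
  obtain ⟨R, hRcard, hR⟩ := exists_discretization_of_good_blocks (fun Q => σ / D Q)
    (fun Q i => (D Q)⁻¹ • (Q i - μ)) (fun Q => div_pos hσ0 (hD0 Q)) hσD hw hm hκ hε0 hε1
    (fun l i j => σ⁻¹ • (X l i j - μ)) I₀ᶜ
    (fun i hi l => by
      have h1 := hgood i (Finset.mem_compl.1 hi) l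
      rw [← hσ2] at h1
      have e : ∀ j, ‖σ⁻¹ • (X l i j - μ)‖ ^ 2 / (m : ℝ)
          = (σ ^ 2)⁻¹ * (‖X l i j - μ‖ ^ 2 / m) := by
        intro j
        rw [norm_smul, mul_pow, norm_inv, Real.norm_eq_abs, abs_of_pos hσ0, inv_pow, mul_div_assoc]
      simp only [e]
      rw [← Finset.mul_sum, inv_mul_le_iff₀ (pow_pos hσ0 2)]
      linarith)
    (Nat.le_ceil (10 ^ 15 * (k : ℝ) / ε ^ 2))
  refine ⟨R.image (normalizedKMeansLoss 𝒟), ?_, ?_⟩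
  · rintro f ⟨Q, rfl⟩
    obtain ⟨Q', hQ', I, hI, hclose⟩ := hR Q
    refine ⟨_, Finset.mem_image_of_mem _ hQ', I₀ ∪ I, ?_, fun i hi l => ?_⟩
    · have : ((I₀ ∪ I).card : ℝ) ≤ I₀.card + I.card := by exact_mod_cast Finset.card_union_le _ _
      linarith
    · rw [Finset.mem_union, not_or] at hi
      have := hclose i (Finset.mem_compl.2 hi.1) hi.2 l
      simpa only [normalizedKMeansLoss_eq_iInf (μ := μ) _ hσ0 (hD0 _) (hD2 _)] using this
  · have h1 : ((R.image (normalizedKMeansLoss 𝒟)).card : ℝ) ≤ R.card := by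
      exact_mod_cast Finset.card_image_le
    rw [finrank_euclideanSpace_fin] at hRcard
    have h2 := size_bound hd hk hε0 hε1
    linarith

/-- The class `ℱ_k` of normalized `k`-means losses admits a `𝒟`-discretization with
threshold function `κ₀(δ) = 2·8000²·ln(e/δ)`, threshold `ε₀ = 1` and size function
`N(ε, m) = 8·(72·10⁴·8000·e/ε)^{140 k d ln(6k)}`, whenever `σ² < ∞`. -/
theorem kmeans_admits_D_discretization (d k : ℕ)
    (𝒟 : Measure (EuclideanSpace ℝ (Fin d))) [IsProbabilityMeasure 𝒟]
    (hmean : Integrable (fun x => x) 𝒟)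
    (hσ : Integrable (fun x => ‖x - ∫ z, z ∂𝒟‖ ^ 2) 𝒟) :
    AdmitsDDiscretization 𝒟 (kmeansClass d k 𝒟)
      (fun δ => 2 * 8000 ^ 2 * Real.log (Real.exp 1 / δ)) 1
      (fun ε _m =>
        8 * (72 * 10 ^ 4 * 8000 * Real.exp 1 / ε) ^ (140 * (k : ℝ) * (d : ℝ) * Real.log (6 * (k : ℝ)))) := by
  intro ε δ hε0 hε1 hδ0 hδ1 m κ hm hκ
  have hκ0 : 0 < κ := by
    have h1 : 1 ≤ Real.log (Real.exp 1 / δ) := by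
      rw [Real.log_div (Real.exp_pos 1).ne' hδ0.ne', Real.log_exp]
      linarith [Real.log_neg hδ0 hδ1]
    have h2 : (0 : ℝ) < κ := by
      dsimp only at hκ
      linarith
    exact_mod_cast h2
  refine (measure_good_event 𝒟 (fun x => sq_nonneg ‖x - ∫ z, z ∂𝒟‖)
    ((measurable_id.sub_const _).norm.pow_const 2) hσ hm hδ0 hδ1 hκ).trans
    (measure_mono fun X hX => ?_)
  simp only [Set.mem_ofPred_eq] at hX ⊢
  exact exists_kmeans_discretization d k 𝒟 hσ hε0 hε1 hm hκ0 X hX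
end

section
/- Let ℓ : ℝ → [0,∞) be a continuous loss function, 0 < δ < 1, p ∈ (1,2], W > 0, and let 𝒟_X and 𝒟_Y be distributions over ℝ^d and ℝ respectively with E[‖X‖₁] < ∞ and E[|Y|] < ∞; let 𝒟 = 𝒟_X × 𝒟_Y and ℱ_W = {(x,y) ↦ ℓ(⟨w,x⟩ − y) : w ∈ ℝ^d, ‖w‖₂ ≤ W}. Suppose ∞ > v_p ≥ sup_{f∈ℱ_W} E_{(X,Y)∼𝒟}[f(X,Y)^p]. Then for ε > 0, if m ≥ (400·16^p·v_p/ε^p)^{1/(p−1)} and κ ≥ max{κ₀(δ/8), 10⁶·ln(2)/99, 50·ln(8·N(ε/16, m)/δ)}, where κ₀(δ) = 4·1250²·ln(e/δ), N(ε, m) = (6W/β(ε,m,𝒟))^d, β(ε,m,𝒟) = min(W/2, α_ℓ(J, ε)/(3750·(E[‖X‖₁] + E[|Y|])·m)), and J = (3W/2 + 1)·3750·(E[‖X‖₁] + E[|Y|])·m, then with probability at least 1 − δ over Z = (X,Y) ∼ (𝒟^m)^κ, for all f ∈ ℱ_W it holds that |MoM(f, Z) − E_{Z'∼𝒟}[f(Z')]|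 ≤ ε. -/
/-!
The proof replaces `ℱ_W` by a finite net and needs no symmetrization.

Let `M = 3750 (E‖X‖₁ + E|Y|) m` and `t = ε / 4`. By Markov's inequality a block of `m` points
leaves `{‖x‖₁ + |y| ≤ M}` with probability at most `1 / 3750` (`pi_exists_large_le`). For a fixed
loss `f`, truncation at height `m t` and Chebyshev's inequality show that the block mean is
`t`-close to `E f` except with probability `1 / 500` (`blockMean_concentration`). A block is bad
for `f` if one of these two events occurs; by an exponential moment bound at least half of the
`κ` blocks are bad with probability at most `exp (-κ / 50)` (`pi_majority_bad_le`).

On `{‖x‖₁ + |y| ≤ M}` two losses whose parameters are `β / 2`-close differ by at most `ε / 16`,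
and the volume argument gives a `β / 2`-net of the `W`-ball of size at most `(6 W / β) ^ d`
(`exists_loss_net`), so with probability `1 - δ` the good blocks are a majority for all net
elements simultaneously. On a good block, `f` and its net approximation `f'` have means within
`ε / 16` of each other. Also `|E f - E f'| ≤ 2 t + ε / 16`, since some block is good for both `f`
and `f'`. Hence on a strict majority of blocks the mean of `f` is within
`3 t + ε / 8 < ε` of `E f`, and so is the median (`median_mem_Icc`).

When `ℓ` oscillates by at most `ε / 16` on the whole interval `[-J, J]`, the set defining
`alphaEll` is unbounded and its `sSup` is the junk value `0`, which makes the third lower bound on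
`κ` useless for `d > 0`; then a one-point net suffices, and the first lower bound on `κ` is enough.
-/

open MeasureTheory

/-- The median of `κ` real numbers: the `((κ+1)/2)`-th smallest if `κ` is odd and the
`(κ/2)`-th smallest if `κ` is even (both given by the zero-based index `(κ-1)/2`). -/
noncomputable def median {κ : ℕ} (a : Fin κ → ℝ) : ℝ :=
  ((List.ofFn a).mergeSort fun x y => decide (x ≤ y)).getD ((κ - 1) / 2) 0

/-- The Median-of-Means estimator on a sample of `κ` blocks of `m` points. -/
noncomputable def mom {𝒳 : Type*} {m κ : ℕ} (f : 𝒳 → ℝ) (X : Fin κ → Fin m → 𝒳) : ℝ :=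
  median fun i => blockMean f (X i)

/-- `α_ℓ(a,b)`: the largest positive real `α` such that any two points of `[-a,a]` at
distance at most `α` have `ℓ`-values at distance at most `b`. -/
noncomputable def alphaEll (ℓ : ℝ → ℝ) (a b : ℝ) : ℝ :=
  sSup {α : ℝ | 0 < α ∧ ∀ x y : ℝ, |x| ≤ a → |y| ≤ a → |x - y| ≤ α → |ℓ x - ℓ y| ≤ b}

/-- The class `ℱ_W` of losses of norm-constrained linear predictors:
`(x, y) ↦ ℓ(⟨w, x⟩ - y)` for `‖w‖₂ ≤ W`. -/
def linRegClass (d : ℕ) (ℓ : ℝ → ℝ) (W : ℝ) : Set (EuclideanSpace ℝ (Fin d) × ℝ → ℝ) :=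
  {f | ∃ w : EuclideanSpace ℝ (Fin d), ‖w‖ ≤ W ∧ f = fun z => ℓ ((∑ i, w i * z.1 i) - z.2)}

/-! ### The median -/

open Classical in
/-- A closed interval containing a strict majority of the entries contains the median. -/
lemma median_mem_Icc {κ : ℕ} (a : Fin κ → ℝ) (lo hi : ℝ)
    (h : 2 * (Finset.univ.filter fun i => a i ∉ Set.Icc lo hi).card < κ) :
    median a ∈ Set.Icc lo hi := by
  have hκ : 0 < κ := by omega
  set L := (List.ofFn a).mergeSort fun x y => decide (x ≤ y) with hL
  have hlen : L.length = κ := by simp [hL]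
  have hk : (κ - 1) / 2 < L.length := by omega
  have hsort : L.Pairwise (· ≤ ·) := by
    have := List.pairwise_mergeSort (le := fun x y : ℝ => decide (x ≤ y))
      (by simpa using fun a b c => le_trans) (by simpa using le_total) (List.ofFn a)
    simpa using this
  have hcount : L.countP (fun x => decide (x ∉ Set.Icc lo hi)) =
      (Finset.univ.filter fun i => a i ∉ Set.Icc lo hi).card := by
    rw [hL, (List.mergeSort_perm _ _).countP_eq, ← Multiset.coe_countP,
      show ((List.ofFn a : List ℝ) : Multiset ℝ) = Finset.univ.val.map a by
        simp [List.ofFn_eq_map, Fin.univ_def], Multiset.countP_map]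
    simp [Finset.card, Finset.filter]
  have hmed : median a = L[(κ - 1) / 2] := by
    rw [median, ← hL, List.getD_eq_getElem _ _ hk]
  rw [hmed]
  by_contra hcon
  rw [Set.mem_Icc, not_and_or, not_le, not_le] at hcon
  rcases hcon with hlt | hlt
  · have hall : (L.take ((κ - 1) / 2 + 1)).countP (fun x => decide (x ∉ Set.Icc lo hi)) =
        (L.take ((κ - 1) / 2 + 1)).length := by
      rw [List.countP_eq_length]
      intro x hx
      obtain ⟨i, hi, rfl⟩ := List.mem_iff_getElem.1 hx
      have hi' : i ≤ (κ - 1) / 2 := by simp at hi; omega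
      have : L[i] ≤ L[(κ - 1) / 2] := by
        rcases hi'.eq_or_lt with h | h
        · simp [h]
        · exact List.pairwise_iff_getElem.1 hsort _ _ _ _ h
      simp only [List.getElem_take, Set.mem_Icc, decide_eq_true_eq]
      intro h
      linarith [h.1]
    have := (List.take_sublist ((κ - 1) / 2 + 1) L).countP_le
      (p := fun x => decide (x ∉ Set.Icc lo hi))
    rw [hall, hcount, List.length_take] at this
    omega
  · have hall : (L.drop ((κ - 1) / 2)).countP (fun x => decide (x ∉ Set.Icc lo hi)) =
        (L.drop ((κ - 1) / 2)).length := by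
      rw [List.countP_eq_length]
      intro x hx
      obtain ⟨i, hi, rfl⟩ := List.mem_iff_getElem.1 hx
      have hi' : (κ - 1) / 2 + i < L.length := by simp at hi; omega
      have : L[(κ - 1) / 2] ≤ L[(κ - 1) / 2 + i] := by
        rcases Nat.eq_zero_or_pos i with h | h
        · simp [h]
        · exact List.pairwise_iff_getElem.1 hsort _ _ _ _ (by omega)
      simp only [List.getElem_drop, Set.mem_Icc, decide_eq_true_eq]
      intro h
      linarith [h.2]
    have := (List.drop_sublist ((κ - 1) / 2) L).countP_le
      (p := fun x => decide (x ∉ Set.Icc lo hi))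
    rw [hall, hcount, List.length_drop] at this
    omega

/-! ### Nets of Euclidean balls -/

/-- Volumetric covering bound: a maximal `r`-separated subset of the `W`-ball is an `r`-net, and
the disjoint balls of radius `r / 2` around its points lie in the ball of radius `W + r / 2`. -/
lemma exists_net (d : ℕ) {W r : ℝ} (hW : 0 ≤ W) (hr : 0 < r) :
    ∃ T : Finset (EuclideanSpace ℝ (Fin d)), (∀ w ∈ T, ‖w‖ ≤ W) ∧
      (∀ w, ‖w‖ ≤ W → ∃ w' ∈ T, ‖w - w'‖ ≤ r) ∧ (T.card : ℝ) ≤ ((2 * W + r) / r) ^ d := by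
  classical
  have key : ∀ s : Finset (EuclideanSpace ℝ (Fin d)), (∀ w ∈ s, ‖w‖ ≤ W) →
      (∀ c ∈ s, ∀ e ∈ s, c ≠ e → r ≤ ‖c - e‖) → (s.card : ℝ) ≤ ((2 * W + r) / r) ^ d := by
    intro s hs hsep
    have D : Set.Pairwise (s : Set (EuclideanSpace ℝ (Fin d)))
        (Function.onFun Disjoint fun c => Metric.ball c (r / 2)) := by
      rintro c hc e he hce
      apply Metric.ball_disjoint_ball
      rw [dist_eq_norm]
      linarith [hsep c hc e he hce]
    have hsub : (⋃ c ∈ s, Metric.ball c (r / 2)) ⊆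
        Metric.ball (0 : EuclideanSpace ℝ (Fin d)) (W + r / 2) := by
      refine Set.iUnion₂_subset fun x hx => Metric.ball_subset_ball' ?_
      rw [dist_zero_right]
      linarith [hs x hx]
    have h1 := measure_mono (μ := (volume : Measure (EuclideanSpace ℝ (Fin d)))) hsub
    rw [measure_biUnion_finset D fun c _ => measurableSet_ball] at h1
    simp only [Measure.addHaar_ball_of_pos volume _ (half_pos hr),
      Measure.addHaar_ball_of_pos volume _ (show 0 < W + r / 2 by positivity),
      Finset.sum_const, nsmul_eq_mul, ← mul_assoc] at h1
    have h2 := (ENNReal.mul_le_mul_iff_left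
      (Metric.measure_ball_pos _ _ zero_lt_one).ne' measure_ball_lt_top.ne).1 h1
    have h3 := ENNReal.toReal_le_of_le_ofReal (by positivity) h2
    rw [ENNReal.toReal_mul, ENNReal.toReal_ofReal (by positivity), ENNReal.toReal_natCast,
      finrank_euclideanSpace_fin] at h3
    rw [show (2 * W + r) / r = (W + r / 2) / (r / 2) by field_simp, div_pow,
      le_div_iff₀ (by positivity)]
    exact h3
  let A : Set ℕ := {n | ∃ s : Finset (EuclideanSpace ℝ (Fin d)), s.card = n ∧
    (∀ w ∈ s, ‖w‖ ≤ W) ∧ ∀ c ∈ s, ∀ e ∈ s, c ≠ e → r ≤ ‖c - e‖}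
  have hne : A.Nonempty := ⟨0, ∅, by simp⟩
  have hbdd : BddAbove A := by
    refine ⟨⌊((2 * W + r) / r) ^ d⌋₊, ?_⟩
    rintro n ⟨s, rfl, hs, hsep⟩
    exact Nat.le_floor (key s hs hsep)
  obtain ⟨T, hTc, hTW, hTs⟩ := Nat.sSup_mem hne hbdd
  refine ⟨T, hTW, fun w hw => ?_, key T hTW hTs⟩
  by_contra! hcon
  have hwT : w ∉ T := fun h => by have := hcon w h; simp at this; linarith
  have : (insert w T).card ∈ A := by
    refine ⟨_, rfl, ?_, ?_⟩
    · intro u hu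
      rcases Finset.mem_insert.1 hu with rfl | hu
      exacts [hw, hTW _ hu]
    · intro c hc e he hce
      rcases Finset.mem_insert.1 hc with rfl | hc' <;>
        rcases Finset.mem_insert.1 he with rfl | he'
      · exact absurd rfl hce
      · exact (hcon _ he').le
      · rw [norm_sub_rev]; exact (hcon _ hc').le
      · exact hTs _ hc' _ he' hce
  have := le_csSup hbdd this
  rw [Finset.card_insert_of_notMem hwT, ← hTc] at this
  omega

/-! ### Probability bounds for blocks -/

lemma pi_exists_le {Ω : Type*} [MeasurableSpace Ω] (μ : Measure Ω) [IsProbabilityMeasure μ] (m : ℕ) (A : Set Ω)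
    (hA : MeasurableSet A) :
    (Measure.pi fun _ : Fin m => μ) {x | ∃ j, x j ∈ A} ≤ m * μ A := by
  have : {x : Fin m → Ω | ∃ j, x j ∈ A} = ⋃ j, (fun x => x j) ⁻¹' A := by ext; simp
  rw [this]
  refine (measure_iUnion_fintype_le _ _).trans ?_
  have h (j : Fin m) : (Measure.pi fun _ : Fin m => μ) ((fun x => x j) ⁻¹' A) = μ A :=
    (measurePreserving_eval (fun _ : Fin m => μ) j).measure_preimage hA.nullMeasurableSet
  simp [h]

open Classical in
/-- Chernoff bound: `4 ^ #bad` has mean at most `(1 + 3 / 400) ^ κ`, whereas it is at least `2 ^ κ`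
when half of the blocks are bad. -/
lemma pi_majority_bad_le {Ω : Type*} [MeasurableSpace Ω] (μ : Measure Ω) [IsProbabilityMeasure μ] (κ : ℕ) (B : Set Ω)
    (hB : MeasurableSet B) (hq : μ B ≤ ENNReal.ofReal (1 / 400)) :
    (Measure.pi fun _ : Fin κ => μ) {Z | κ ≤ 2 * (Finset.univ.filter fun i => Z i ∈ B).card}
      ≤ ENNReal.ofReal (Real.exp (-(κ / 50))) := by
  let g : Ω → ℝ := fun x => if x ∈ B then 4 else 1
  have hgm : Measurable g := Measurable.ite hB measurable_const measurable_const
  have hg0 : ∀ x, 0 ≤ g x := fun x => by simp only [g]; split_ifs <;> norm_num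
  have hprod : ∀ Z : Fin κ → Ω,
      ∏ i, g (Z i) = 4 ^ (Finset.univ.filter fun i => Z i ∈ B).card := by
    intro Z
    simp [g, Finset.prod_ite]
  have hgint : ∫ x, g x ∂μ = 1 + 3 * μ.real B := by
    have : g = fun x => 1 + B.indicator (fun _ => (3 : ℝ)) x := by
      ext x
      simp only [g, Set.indicator]
      split_ifs <;> norm_num
    rw [this, integral_add (integrable_const _) ((integrable_const _).indicator hB),
      integral_indicator_const _ hB]
    simp [mul_comm]
  have hq' : μ.real B ≤ 1 / 400 := ENNReal.toReal_le_of_le_ofReal (by norm_num) hq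
  have hint : Integrable (fun Z : Fin κ → Ω => ∏ i, g (Z i)) (Measure.pi fun _ : Fin κ => μ) := by
    refine Integrable.of_bound (C := 4 ^ κ) ?_ (Filter.Eventually.of_forall fun Z => ?_)
    · exact (Finset.measurable_prod _ fun i _ =>
        hgm.comp (measurable_pi_apply i)).aestronglyMeasurable
    · rw [hprod, Real.norm_of_nonneg (by positivity)]
      exact pow_le_pow_right₀ (by norm_num) ((Finset.card_le_univ _).trans (by simp))
  have hM := mul_meas_ge_le_integral_of_nonneg
    (Filter.Eventually.of_forall fun Z => Finset.prod_nonneg fun i _ => hg0 (Z i)) hint (2 ^ κ)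
  rw [integral_fintype_prod_eq_pow, hgint, Fintype.card_fin] at hM
  have hsub : {Z : Fin κ → Ω | κ ≤ 2 * (Finset.univ.filter fun i => Z i ∈ B).card} ⊆
      {Z | (2 : ℝ) ^ κ ≤ ∏ i, g (Z i)} := by
    intro Z hZ
    simp only [Set.mem_ofPred_eq] at hZ ⊢
    rw [hprod, show (4 : ℝ) = 2 ^ 2 by norm_num, ← pow_mul]
    exact pow_le_pow_right₀ (by norm_num) hZ
  refine (measure_mono hsub).trans ?_
  rw [← ofReal_measureReal]
  apply ENNReal.ofReal_le_ofReal
  have h1 : (1 + 3 * μ.real B) ^ κ ≤ 2 ^ κ * Real.exp (-(κ / 50)) := by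
    rw [show -((κ : ℝ) / 50) = κ * (-(1 / 50)) by ring, Real.exp_nat_mul, ← mul_pow]
    refine pow_le_pow_left₀ (by positivity) ?_ _
    have := Real.add_one_le_exp (-(1 / 50 : ℝ))
    linarith
  have h2 := hM.trans h1
  exact le_of_mul_le_mul_left h2 (by positivity)

lemma integrable_of_rpow {Ω : Type*} [MeasurableSpace Ω] (μ : Measure Ω) [IsProbabilityMeasure μ] {f : Ω → ℝ}
    (hf : Measurable f) (hf0 : ∀ x, 0 ≤ f x) {p : ℝ} (hp : 1 < p)
    (hint : Integrable (fun x => f x ^ p) μ) : Integrable f μ := by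
  refine ((integrable_const (1 : ℝ)).add hint).mono' hf.aestronglyMeasurable
    (Filter.Eventually.of_forall fun x => ?_)
  rw [Real.norm_of_nonneg (hf0 x), Pi.add_apply]
  rcases le_total (f x) 1 with h | h
  · linarith [Real.rpow_nonneg (hf0 x) p]
  · linarith [Real.self_le_rpow_of_one_le h hp.le]

/-- Weak law for heavy tails: truncation of `f` at `T = m t` changes the sample with
probability at most `1 / 1600`, shifts the mean by at most `t / 1600`, and leaves a function of
variance at most `m t² / 1600`, to which Chebyshev's inequality applies. -/
lemma blockMean_concentration {Ω : Type*} [MeasurableSpace Ω] (μ : Measure Ω) [IsProbabilityMeasure μ] {f : Ω → ℝ}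
    (hf : Measurable f) (hf0 : ∀ x, 0 ≤ f x) {p : ℝ} (hp1 : 1 < p) (hp2 : p ≤ 2)
    (hint : Integrable (fun x => f x ^ p) μ) {v : ℝ} (hv : ∫ x, f x ^ p ∂μ ≤ v)
    {m : ℕ} (hm : 0 < m) {t : ℝ} (ht : 0 < t)
    (hvt : 1600 * v ≤ (m * t) ^ (p - 1) * t) :
    (Measure.pi fun _ : Fin m => μ) {x | t < |blockMean f x - ∫ z, f z ∂μ|}
      ≤ ENNReal.ofReal (1 / 500) := by
  have hm' : (0 : ℝ) < m := by exact_mod_cast hm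
  set T : ℝ := m * t with hT
  have hT0 : 0 < T := by positivity
  let g : Ω → ℝ := fun x => min (f x) T
  have hgm : Measurable g := hf.min measurable_const
  have hg0 : ∀ x, 0 ≤ g x := fun x => le_min (hf0 x) hT0.le
  have hgT : ∀ x, g x ≤ T := fun x => min_le_right _ _
  have hfint := integrable_of_rpow μ hf hf0 hp1 hint
  have hgLp : MemLp g 2 μ := by
    refine MemLp.of_bound hgm.aestronglyMeasurable T (Filter.Eventually.of_forall fun x => ?_)
    rw [Real.norm_of_nonneg (hg0 x)]
    exact hgT x
  have hgint : Integrable g μ := hgLp.integrable (by norm_num)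
  have hTp : 0 < T ^ (p - 1) := Real.rpow_pos_of_pos hT0 _
  have hTp2 : 0 < T ^ (2 - p) := Real.rpow_pos_of_pos hT0 _
  have hTT : T ^ (2 - p) * T ^ (p - 1) = T := by
    rw [← Real.rpow_add hT0]; norm_num
  have hTT' : T ^ (p - 1) * T = T ^ p := by
    rw [← Real.rpow_add_one hT0.ne']; norm_num
  -- Above the truncation level, `f = f ^ p / f ^ (p - 1) ≤ f ^ p / T ^ (p - 1)`.
  have hbias_pt : ∀ x, T ^ (p - 1) * (f x - g x) ≤ f x ^ p := by
    intro x
    rcases le_total (f x) T with h | h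
    · simp only [g, min_eq_left h, sub_self, mul_zero]
      exact Real.rpow_nonneg (hf0 x) p
    · have hfx : 0 < f x := hT0.trans_le h
      have h1 : T ^ (p - 1) ≤ f x ^ (p - 1) :=
        Real.rpow_le_rpow hT0.le h (by linarith)
      have h2 : f x ^ (p - 1) * f x = f x ^ p := by
        rw [← Real.rpow_add_one hfx.ne']; norm_num
      rw [← h2]
      have := hg0 x
      exact mul_le_mul h1 (by linarith) (by simp only [g, min_eq_right h]; linarith)
        (Real.rpow_nonneg (hf0 x) _)
  have hbias : ∫ x, f x ∂μ - ∫ x, g x ∂μ ≤ t / 1600 := by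
    have h1 : ∫ x, T ^ (p - 1) * (f x - g x) ∂μ ≤ ∫ x, f x ^ p ∂μ :=
      integral_mono ((hfint.sub hgint).const_mul _) hint hbias_pt
    rw [integral_const_mul, integral_sub hfint hgint] at h1
    have h2 : T ^ (p - 1) * (∫ x, f x ∂μ - ∫ x, g x ∂μ) ≤ T ^ (p - 1) * (t / 1600) := by
      linarith
    exact le_of_mul_le_mul_left h2 hTp
  have hbias0 : ∫ x, g x ∂μ ≤ ∫ x, f x ∂μ :=
    integral_mono hgint hfint fun x => min_le_left _ _
  -- Split `g ^ 2 = g ^ (2 - p) * g ^ p` and use `g ≤ T` in the first factor, `g ≤ f` in the second.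
  have hsq_pt : ∀ x, g x ^ 2 ≤ T ^ (2 - p) * f x ^ p := by
    intro x
    have h3 : g x ^ 2 = g x ^ (2 - p) * g x ^ p := by
      rw [← Real.rpow_add_of_nonneg (hg0 x) (by linarith) (by linarith)]
      norm_num
    rw [h3]
    exact mul_le_mul (Real.rpow_le_rpow (hg0 x) (hgT x) (by linarith))
      (Real.rpow_le_rpow (hg0 x) (min_le_left _ _) (by linarith))
      (Real.rpow_nonneg (hg0 x) _) hTp2.le
  have hvar : ProbabilityTheory.variance g μ ≤ m * t ^ 2 / 1600 := by
    refine (ProbabilityTheory.variance_le_expectation_sq hgm.aestronglyMeasurable).trans ?_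
    have h1 : ∫ x, g x ^ 2 ∂μ ≤ ∫ x, T ^ (2 - p) * f x ^ p ∂μ :=
      integral_mono hgLp.integrable_sq (hint.const_mul _) hsq_pt
    rw [integral_const_mul] at h1
    have h2 : T ^ (2 - p) * ∫ x, f x ^ p ∂μ ≤ T ^ (2 - p) * (T ^ (p - 1) * t / 1600) :=
      mul_le_mul_of_nonneg_left (by linarith) hTp2.le
    have h3 : T ^ (2 - p) * (T ^ (p - 1) * t / 1600) = m * t ^ 2 / 1600 := by
      rw [show T ^ (2 - p) * (T ^ (p - 1) * t / 1600) =
        T ^ (2 - p) * T ^ (p - 1) * t / 1600 by ring, hTT, hT]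
      ring
    exact h1.trans (h2.trans h3.le)
  let P : Measure (Fin m → Ω) := Measure.pi fun _ : Fin m => μ
  let G : (Fin m → Ω) → ℝ := ∑ j, fun x : Fin m → Ω => g (x j)
  have hGv : ProbabilityTheory.variance G P = m * ProbabilityTheory.variance g μ := by
    have := ProbabilityTheory.variance_sum_pi (μ := fun _ : Fin m => μ) (X := fun _ => g)
      (fun _ => hgLp)
    simpa using this
  have hGLp : MemLp G 2 P := memLp_finsetSum' _ fun j _ =>
    hgLp.comp_measurePreserving (measurePreserving_eval (fun _ : Fin m => μ) j)
  have hGE : ∫ x, G x ∂P = m * ∫ z, g z ∂μ := by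
    simp only [G, Finset.sum_apply]
    rw [integral_finsetSum]
    · have h (j : Fin m) : ∫ x, g (x j) ∂P = ∫ z, g z ∂μ :=
        integral_comp_eval (μ := fun _ : Fin m => μ) (i := j) hgm.aestronglyMeasurable
      simp [h]
    · exact fun j _ => (measurePreserving_eval (fun _ : Fin m => μ) j).integrable_comp_of_integrable
        hgint
  have hcheb := ProbabilityTheory.meas_ge_le_variance_div_sq hGLp
    (c := 9 / 10 * (m * t)) (by positivity)
  have htrunc : P {x | ∃ j, x j ∈ {z | T < f z}} ≤ ENNReal.ofReal (1 / 1600) := by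
    refine (pi_exists_le μ m _ (measurableSet_lt measurable_const hf)).trans ?_
    have hM := mul_meas_ge_le_integral_of_nonneg
      (Filter.Eventually.of_forall fun z => Real.rpow_nonneg (hf0 z) p) hint (T ^ p)
    have hsub : {z | T < f z} ⊆ {z | T ^ p ≤ f z ^ p} := fun z hz =>
      Real.rpow_le_rpow hT0.le (le_of_lt hz) (by linarith)
    rw [← ofReal_measureReal, ← ENNReal.ofReal_natCast, ← ENNReal.ofReal_mul (by positivity)]
    apply ENNReal.ofReal_le_ofReal
    have h1 : T ^ p * μ.real {z | T < f z} ≤ T ^ (p - 1) * t / 1600 := by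
      have := mul_le_mul_of_nonneg_left (measureReal_mono (μ := μ) hsub)
        (Real.rpow_nonneg hT0.le p)
      linarith
    rw [← hTT', mul_assoc, mul_div_assoc] at h1
    have h2 := le_of_mul_le_mul_left h1 hTp
    rw [hT, show (m : ℝ) * t * μ.real {z | (m : ℝ) * t < f z} =
      t * (m * μ.real {z | (m : ℝ) * t < f z}) by ring,
      show t / 1600 = t * (1 / 1600) by ring] at h2
    exact le_of_mul_le_mul_left h2 ht
  -- Chebyshev is used at `9 t / 10`: the remaining `t / 10` absorbs the truncation bias.
  have hsub : {x : Fin m → Ω | t < |blockMean f x - ∫ z, f z ∂μ|} ⊆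
      {x | ∃ j, x j ∈ {z | T < f z}} ∪ {x | 9 / 10 * (m * t) ≤ |G x - ∫ x, G x ∂P|} := by
    intro x hx
    by_contra hcon
    simp only [Set.mem_union, Set.mem_ofPred_eq, not_or, not_exists, not_lt, not_le] at hcon hx
    obtain ⟨hc1, hc2⟩ := hcon
    have hGx : G x = m * blockMean f x := by
      simp only [G, blockMean, Finset.sum_apply]
      rw [mul_div_cancel₀ _ hm'.ne']
      exact Finset.sum_congr rfl fun j _ => min_eq_left (hc1 j)
    rw [hGE, hGx, ← mul_sub, abs_mul, abs_of_pos hm'] at hc2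
    have h1 : |blockMean f x - ∫ z, g z ∂μ| < 9 / 10 * t := by
      refine lt_of_mul_lt_mul_left (a := (m : ℝ)) ?_ hm'.le
      linarith
    rw [abs_lt] at h1
    apply hx.not_ge
    rw [abs_le]
    constructor <;> linarith
  refine (measure_mono hsub).trans ((measure_union_le _ _).trans ?_)
  refine (add_le_add htrunc hcheb).trans ?_
  rw [← ENNReal.ofReal_add (by norm_num)
    (div_nonneg (ProbabilityTheory.variance_nonneg _ _) (by positivity))]
  apply ENNReal.ofReal_le_ofReal
  have : ProbabilityTheory.variance G P / (9 / 10 * (m * t)) ^ 2 ≤ 1 / 1200 := by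
    rw [div_le_iff₀ (by positivity), hGv]
    have := mul_le_mul_of_nonneg_left hvar hm'.le
    have h0 : 0 ≤ ((m : ℝ) * t) ^ 2 := by positivity
    nlinarith
  linarith

/-! ### Discretization of the loss class -/

lemma abs_sum_mul_le {d : ℕ} (w x : EuclideanSpace ℝ (Fin d)) :
    |∑ i, w i * x i| ≤ ‖w‖ * ∑ i, |x i| := by
  rw [Finset.mul_sum]
  refine (Finset.abs_sum_le_sum_abs _ _).trans (Finset.sum_le_sum fun i _ => ?_)
  rw [abs_mul]
  exact mul_le_mul_of_nonneg_right (PiLp.norm_apply_le w i) (abs_nonneg _)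

lemma alphaEll_set_nonempty {ℓ : ℝ → ℝ} (hcont : Continuous ℓ) (J : ℝ) {b : ℝ} (hb : 0 < b) :
    {α : ℝ | 0 < α ∧
      ∀ x y : ℝ, |x| ≤ J → |y| ≤ J → |x - y| ≤ α → |ℓ x - ℓ y| ≤ b}.Nonempty := by
  have huc : UniformContinuousOn ℓ (Set.Icc (-J) J) :=
    isCompact_Icc.uniformContinuousOn_of_continuous hcont.continuousOn
  obtain ⟨α, hα, h⟩ := Metric.uniformContinuousOn_iff_le.1 huc b hb
  exact ⟨α, hα, fun x y hx hy hxy => h x (abs_le.1 hx) y (abs_le.1 hy) hxy⟩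

/-- A finite subset of the `W`-ball, small enough for a union bound over events of probability
`exp (-κ / 50)`, whose losses approximate all of `ℱ_W` up to `b` on `{‖x‖₁ + |y| ≤ M}`. -/
lemma exists_loss_net (d : ℕ) {ℓ : ℝ → ℝ} (hcont : Continuous ℓ) {W M b δ : ℝ} (hW : 0 < W)
    (hM : 0 ≤ M) (hb : 0 < b) (hδ : 0 < δ) (κ : ℕ)
    (hκ0 : 4 * 1250 ^ 2 * Real.log (Real.exp 1 / (δ / 8)) ≤ (κ : ℝ))
    (hκ2 : 50 * Real.log (8 *
        ((6 * W / min (W / 2) (alphaEll ℓ ((3 * W / 2 + 1) * M) b / M)) ^ d) / δ) ≤ (κ : ℝ)) :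
    ∃ T : Finset (EuclideanSpace ℝ (Fin d)), (∀ w ∈ T, ‖w‖ ≤ W) ∧
      (∀ w : EuclideanSpace ℝ (Fin d), ‖w‖ ≤ W → ∃ w' ∈ T,
        ∀ z : EuclideanSpace ℝ (Fin d) × ℝ, (∑ i, |z.1 i|) + |z.2| ≤ M →
          |ℓ ((∑ i, w i * z.1 i) - z.2) - ℓ ((∑ i, w' i * z.1 i) - z.2)| ≤ b) ∧
      (T.card : ℝ) * Real.exp (-(κ / 50)) ≤ δ := by
  set J := (3 * W / 2 + 1) * M with hJ
  have hcard : ∀ n : ℝ, n / δ ≤ Real.exp (κ / 50) → n * Real.exp (-(κ / 50)) ≤ δ := by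
    intro n hn
    rw [div_le_iff₀ hδ] at hn
    rw [Real.exp_neg, ← div_eq_mul_inv, div_le_iff₀ (Real.exp_pos _)]
    linarith
  have harg : ∀ w : EuclideanSpace ℝ (Fin d), ‖w‖ ≤ W →
      ∀ z : EuclideanSpace ℝ (Fin d) × ℝ, (∑ i, |z.1 i|) + |z.2| ≤ M →
        |(∑ i, w i * z.1 i) - z.2| ≤ J := by
    intro w hw z hz
    have h0 : 0 ≤ ∑ i, |z.1 i| := Finset.sum_nonneg fun i _ => abs_nonneg _
    have h1 := abs_sum_mul_le w z.1
    have h2 : ‖w‖ * ∑ i, |z.1 i| ≤ W * ∑ i, |z.1 i| := mul_le_mul_of_nonneg_right hw h0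
    have h3 : W * ∑ i, |z.1 i| ≤ W * M :=
      mul_le_mul_of_nonneg_left (by linarith [abs_nonneg z.2]) hW.le
    have h4 := abs_sub (∑ i, w i * z.1 i) z.2
    have h5 : 0 ≤ W * M := by positivity
    rw [hJ]
    linarith
  by_cases hall : ∀ x y : ℝ, |x| ≤ J → |y| ≤ J → |ℓ x - ℓ y| ≤ b
  -- Here `alphaEll ℓ J b` is the junk value `0`, but `w = 0` alone is a net.
  · refine ⟨{0}, by simp [hW.le], fun w hw => ⟨0, by simp, fun z hz => ?_⟩, ?_⟩
    · exact hall _ _ (harg w hw z hz) (harg 0 (by simp [hW.le]) z hz)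
    · apply hcard
      have h1 : Real.log (Real.exp 1 / (δ / 8)) ≤ κ / 50 := by
        have : (0 : ℝ) ≤ κ := Nat.cast_nonneg κ
        linarith
      rw [Real.log_le_iff_le_exp (by positivity)] at h1
      refine le_trans ?_ h1
      rw [Finset.card_singleton, div_div_eq_mul_div, Nat.cast_one]
      gcongr
      linarith [Real.add_one_le_exp (1 : ℝ)]
  · push Not at hall
    obtain ⟨x₀, y₀, hx₀, hy₀, hxy⟩ := hall
    have hMpos : 0 < M := by
      rcases hM.eq_or_lt with h | h
      · rw [hJ, ← h, mul_zero, abs_nonpos_iff] at hx₀ hy₀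
        rw [hx₀, hy₀, sub_self, abs_zero] at hxy
        exact absurd hxy hb.not_gt
      · exact h
    set A := {α : ℝ | 0 < α ∧
      ∀ x y : ℝ, |x| ≤ J → |y| ≤ J → |x - y| ≤ α → |ℓ x - ℓ y| ≤ b} with hA
    have hne : A.Nonempty := alphaEll_set_nonempty hcont J hb
    have hbdd : BddAbove A := by
      refine ⟨|x₀ - y₀|, fun α hα => ?_⟩
      by_contra! hlt
      exact (hα.2 x₀ y₀ hx₀ hy₀ hlt.le).not_gt hxy
    have hα : alphaEll ℓ J b = sSup A := rfl
    rw [hα] at hκ2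
    have hαpos : 0 < sSup A := by
      obtain ⟨α, hα⟩ := hne
      exact hα.1.trans_le (le_csSup hbdd hα)
    set β := min (W / 2) (sSup A / M) with hβ
    have hβpos : 0 < β := lt_min (by positivity) (by positivity)
    have hβW : β ≤ W / 2 := min_le_left _ _
    have hβM : β * M ≤ sSup A := (le_div_iff₀ hMpos).1 (min_le_right _ _)
    -- Radius `β / 2` keeps arguments strictly closer than the supremum, which need not be attained.
    obtain ⟨T, hTW, hTnet, hTcard⟩ := exists_net d hW.le (half_pos hβpos)
    refine ⟨T, hTW, fun w hw => ?_, ?_⟩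
    · obtain ⟨w', hw', hww'⟩ := hTnet w hw
      refine ⟨w', hw', fun z hz => ?_⟩
      obtain ⟨α, hαA, hαlt⟩ := exists_lt_of_lt_csSup hne (half_lt_self hαpos)
      refine hαA.2 _ _ (harg w hw z hz) (harg w' (hTW _ hw') z hz) ?_
      have h0 : 0 ≤ ∑ i, |z.1 i| := Finset.sum_nonneg fun i _ => abs_nonneg _
      have h1 : (∑ i, w i * z.1 i) - z.2 - ((∑ i, w' i * z.1 i) - z.2) =
          ∑ i, (w - w') i * z.1 i := by
        simp [sub_mul, Finset.sum_sub_distrib]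
      rw [h1]
      refine (abs_sum_mul_le _ _).trans ?_
      have h2 : ‖w - w'‖ * ∑ i, |z.1 i| ≤ β / 2 * M :=
        mul_le_mul hww' (by linarith [abs_nonneg z.2]) h0 (by positivity)
      linarith
    · apply hcard
      have h1 : Real.log (8 * (6 * W / β) ^ d / δ) ≤ κ / 50 := by linarith
      rw [Real.log_le_iff_le_exp (by positivity)] at h1
      refine le_trans ?_ h1
      have h2 : ((2 * W + β / 2) / (β / 2)) ^ d ≤ (6 * W / β) ^ d := by
        refine pow_le_pow_left₀ (by positivity) ?_ _
        rw [div_le_div_iff₀ (by positivity) hβpos]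
        nlinarith
      gcongr
      have h3 : 0 ≤ (6 * W / β) ^ d := by positivity
      linarith

/-- Markov's inequality and a union bound over the block; if `E h = 0` then `h = 0` almost surely
and the probability is `0`. -/
lemma pi_exists_large_le {Ω : Type*} [MeasurableSpace Ω] (μ : Measure Ω) [IsProbabilityMeasure μ] {h : Ω → ℝ}
    (hm : Measurable h) (h0 : ∀ x, 0 ≤ h x) (hint : Integrable h μ) (m : ℕ) (hmpos : 0 < m) :
    (Measure.pi fun _ : Fin m => μ)
      {x | ∃ j, x j ∈ {z | 3750 * (∫ z, h z ∂μ) * m < h z}} ≤ ENNReal.ofReal (1 / 3750) := by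
  refine (pi_exists_le μ m _ (measurableSet_lt measurable_const hm)).trans ?_
  have hm' : (0 : ℝ) < m := by exact_mod_cast hmpos
  have hS0 : 0 ≤ ∫ z, h z ∂μ := integral_nonneg h0
  rw [← ofReal_measureReal, ← ENNReal.ofReal_natCast, ← ENNReal.ofReal_mul (by positivity)]
  apply ENNReal.ofReal_le_ofReal
  rcases hS0.eq_or_lt with hS | hS
  · have hae := (integral_eq_zero_iff_of_nonneg h0 hint).1 hS.symm
    have : μ {z | 3750 * (∫ z, h z ∂μ) * m < h z} = 0 := by
      rw [← hS, mul_zero, zero_mul]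
      refine measure_mono_null (fun z hz => ?_) (ae_iff.1 hae)
      exact (ne_of_gt hz : h z ≠ 0)
    simp [measureReal_def, this]
  · have hM := mul_meas_ge_le_integral_of_nonneg (Filter.Eventually.of_forall h0) hint
      (3750 * (∫ z, h z ∂μ) * m)
    set S := ∫ z, h z ∂μ
    have hsub : {z | 3750 * S * m < h z} ⊆ {z | 3750 * S * m ≤ h z} := by
      intro z hz
      rw [Set.mem_ofPred_eq] at hz ⊢
      exact hz.le
    have h1 := mul_le_mul_of_nonneg_left (measureReal_mono (μ := μ) hsub)
      (show 0 ≤ 3750 * S * m by positivity)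
    have h2 : S * (3750 * (m * μ.real {z | 3750 * S * m < h z})) ≤ S * 1 := by
      linarith
    have h3 := le_of_mul_le_mul_left h2 hS
    linarith

lemma blockMean_sub_le {Ω : Type*} {m : ℕ} {f g : Ω → ℝ} {x : Fin m → Ω} {b : ℝ} (hb : 0 ≤ b)
    (h : ∀ j, |f (x j) - g (x j)| ≤ b) : |blockMean f x - blockMean g x| ≤ b := by
  rcases Nat.eq_zero_or_pos m with hm | hm
  · subst hm; simpa [blockMean] using hb
  have hm' : (0 : ℝ) < m := by exact_mod_cast hm
  rw [blockMean, blockMean, ← sub_div, ← Finset.sum_sub_distrib, abs_div, abs_of_pos hm',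
    div_le_iff₀ hm']
  refine (Finset.abs_sum_le_sum_abs _ _).trans ((Finset.sum_le_sum fun j _ => h j).trans ?_)
  simp [mul_comm]

/-! ### Uniform convergence -/

/-- Uniform MoM estimation for linear regression with a general continuous loss: with
probability at least `1 - δ` over `Z ∼ (𝒟^m)^κ`, `𝒟 = 𝒟_X × 𝒟_Y`, every `f ∈ ℱ_W`
satisfies `|MoM(f,Z) - E[f]| ≤ ε`. -/
theorem regression_mom_uniform_convergence (d : ℕ) (ℓ : ℝ → ℝ)
    (hcont : Continuous ℓ) (hnn : ∀ t, 0 ≤ ℓ t) (W : ℝ) (hW : 0 < W)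
    (𝒟X : Measure (EuclideanSpace ℝ (Fin d))) [IsProbabilityMeasure 𝒟X]
    (𝒟Y : Measure ℝ) [IsProbabilityMeasure 𝒟Y]
    (hX1 : Integrable (fun x => ∑ i, |x i|) 𝒟X)
    (hY1 : Integrable (fun y => |y|) 𝒟Y)
    (p : ℝ) (hp1 : 1 < p) (hp2 : p ≤ 2)
    (v : ℝ)
    (hvint : ∀ f ∈ linRegClass d ℓ W, Integrable (fun z => f z ^ p) (𝒟X.prod 𝒟Y))
    (hv : ∀ f ∈ linRegClass d ℓ W, ∫ z, f z ^ p ∂(𝒟X.prod 𝒟Y) ≤ v)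
    (ε δ : ℝ) (hε : 0 < ε) (hδ0 : 0 < δ) (hδ1 : δ < 1)
    (m κ : ℕ)
    (hm : (400 * (16 : ℝ) ^ p * v / ε ^ p) ^ (1 / (p - 1)) ≤ (m : ℝ))
    (hκ0 : 4 * 1250 ^ 2 * Real.log (Real.exp 1 / (δ / 8)) ≤ (κ : ℝ))
    (hκ1 : 10 ^ 6 * Real.log 2 / 99 ≤ (κ : ℝ))
    (hκ2 : 50 * Real.log (8 *
        ((6 * W / min (W / 2)
            (alphaEll ℓ
                ((3 * W / 2 + 1) *
                  (3750 * ((∫ x, ∑ i, |x i| ∂𝒟X) + ∫ y, |y| ∂𝒟Y) * m)) (ε / 16) /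
              (3750 * ((∫ x, ∑ i, |x i| ∂𝒟X) + ∫ y, |y| ∂𝒟Y) * m))) ^ d) / δ)
      ≤ (κ : ℝ)) :
    ENNReal.ofReal (1 - δ) ≤
      (Measure.pi fun _ : Fin κ => Measure.pi fun _ : Fin m => 𝒟X.prod 𝒟Y)
        {Z | ∀ f ∈ linRegClass d ℓ W, |mom f Z - ∫ z, f z ∂(𝒟X.prod 𝒟Y)| ≤ ε} := by
  classical
  set μ := 𝒟X.prod 𝒟Y with hμ
  let F : EuclideanSpace ℝ (Fin d) → EuclideanSpace ℝ (Fin d) × ℝ → ℝ :=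
    fun w z => ℓ ((∑ i, w i * z.1 i) - z.2)
  have hFm : ∀ w, Measurable (F w) := fun w =>
    (hcont.comp (by fun_prop : Continuous fun z : EuclideanSpace ℝ (Fin d) × ℝ =>
      (∑ i, w i * z.1 i) - z.2)).measurable
  have hF0 : ∀ w z, 0 ≤ F w z := fun w z => hnn _
  have hFmem : ∀ w, ‖w‖ ≤ W → F w ∈ linRegClass d ℓ W := fun w hw => ⟨w, hw, rfl⟩
  have hFint : ∀ w, ‖w‖ ≤ W → Integrable (fun z => F w z ^ p) μ := fun w hw =>
    hvint _ (hFmem w hw)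
  have hFv : ∀ w, ‖w‖ ≤ W → ∫ z, F w z ^ p ∂μ ≤ v := fun w hw => hv _ (hFmem w hw)
  have hv0 : 0 ≤ v := (integral_nonneg fun z => Real.rpow_nonneg (hF0 0 z) p).trans
    (hFv 0 (by simp [hW.le]))
  have hp0 : 0 < p - 1 := by linarith
  have hεp : 0 < ε ^ p := Real.rpow_pos_of_pos hε p
  have h16p : 0 < (16 : ℝ) ^ p := Real.rpow_pos_of_pos (by norm_num) p
  have hbase : 0 ≤ 400 * (16 : ℝ) ^ p * v / ε ^ p := by positivity
  have hκpos : 0 < κ := by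
    have h1 : 0 < Real.log (Real.exp 1 / (δ / 8)) := by
      apply Real.log_pos
      rw [lt_div_iff₀ (by positivity)]
      linarith [Real.add_one_le_exp (1 : ℝ)]
    have : (0 : ℝ) < κ := lt_of_lt_of_le (by positivity) hκ0
    exact_mod_cast this
  rcases Nat.eq_zero_or_pos m with hm0 | hmpos
  · -- An empty block is allowed only if `v = 0`, so all losses vanish almost surely;
    -- the block means are `0 / 0 = 0`.
    subst hm0
    have hv00 : v = 0 := by
      by_contra hne
      have hvpos : 0 < v := lt_of_le_of_ne hv0 (Ne.symm hne)
      have : 0 < (400 * (16 : ℝ) ^ p * v / ε ^ p) ^ (1 / (p - 1)) :=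
        Real.rpow_pos_of_pos (by positivity) _
      rw [Nat.cast_zero] at hm
      linarith
    have huniv : {Z : Fin κ → Fin 0 → EuclideanSpace ℝ (Fin d) × ℝ |
        ∀ f ∈ linRegClass d ℓ W, |mom f Z - ∫ z, f z ∂μ| ≤ ε} = Set.univ := by
      rw [Set.eq_univ_iff_forall]
      rintro Z f ⟨w, hw, rfl⟩
      have hmom : mom (F w) Z ∈ Set.Icc (0 : ℝ) 0 := by
        apply median_mem_Icc
        simpa [blockMean] using hκpos
      have hle := hFv w hw
      rw [hv00] at hle
      have hz : ∫ z, F w z ^ p ∂μ = 0 :=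
        le_antisymm hle (integral_nonneg fun z => Real.rpow_nonneg (hF0 w z) p)
      rw [integral_eq_zero_iff_of_nonneg (fun z => Real.rpow_nonneg (hF0 w z) p)
        (hFint w hw)] at hz
      have hE : ∫ z, F w z ∂μ = 0 := by
        apply integral_eq_zero_of_ae
        filter_upwards [hz] with z hz
        exact ((Real.rpow_eq_zero_iff_of_nonneg (hF0 w z)).1 hz).1
      have hmom0 : mom (F w) Z = 0 := le_antisymm hmom.2 hmom.1
      change |mom (F w) Z - ∫ z, F w z ∂μ| ≤ ε
      rw [hE, hmom0, sub_zero, abs_zero]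
      exact hε.le
    rw [huniv, measure_univ]
    exact ENNReal.ofReal_le_one.2 (by linarith)
  have hm' : (0 : ℝ) < m := by exact_mod_cast hmpos
  set t := ε / 4 with ht
  have htpos : 0 < t := by positivity
  have hvt : 1600 * v ≤ (m * t) ^ (p - 1) * t := by
    have h1 : 400 * (16 : ℝ) ^ p * v / ε ^ p ≤ (m : ℝ) ^ (p - 1) := by
      have := Real.rpow_le_rpow (Real.rpow_nonneg hbase _) hm hp0.le
      rwa [← Real.rpow_mul hbase, one_div_mul_cancel hp0.ne', Real.rpow_one] at this
    have h2 : (m * t) ^ (p - 1) * t = (m : ℝ) ^ (p - 1) * t ^ p := by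
      rw [Real.mul_rpow hm'.le htpos.le, mul_assoc, ← Real.rpow_add_one htpos.ne']
      norm_num
    have h3 : ε ^ p = 4 ^ p * t ^ p := by
      rw [← Real.mul_rpow (by norm_num) htpos.le, ht]
      congr 1
      ring
    have h4 : (16 : ℝ) ^ p = 4 ^ p * 4 ^ p := by
      rw [← Real.mul_rpow (by norm_num) (by norm_num)]
      norm_num
    have h5 : (4 : ℝ) ≤ 4 ^ p := Real.self_le_rpow_of_one_le (by norm_num) hp1.le
    have htp : 0 < t ^ p := Real.rpow_pos_of_pos htpos p
    rw [h2]
    rw [div_le_iff₀ hεp, h3, h4] at h1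
    have h6 : (4 : ℝ) ^ p * (400 * 4 ^ p * v) ≤ 4 ^ p * ((m : ℝ) ^ (p - 1) * t ^ p) := by
      linarith
    have h7 := le_of_mul_le_mul_left h6 (by linarith)
    nlinarith
  let h : EuclideanSpace ℝ (Fin d) × ℝ → ℝ := fun z => (∑ i, |z.1 i|) + |z.2|
  have hhm : Measurable h := by
    have : Continuous h := by fun_prop
    exact this.measurable
  have hh0 : ∀ z, 0 ≤ h z := fun z =>
    add_nonneg (Finset.sum_nonneg fun i _ => abs_nonneg _) (abs_nonneg _)
  have hhint : Integrable h μ := (hX1.comp_fst 𝒟Y).add (hY1.comp_snd 𝒟X)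
  have hhS : ∫ z, h z ∂μ = (∫ x, ∑ i, |x i| ∂𝒟X) + ∫ y, |y| ∂𝒟Y := by
    rw [hμ, integral_add (hX1.comp_fst 𝒟Y) (hY1.comp_snd 𝒟X),
      integral_fun_fst (fun x : EuclideanSpace ℝ (Fin d) => ∑ i, |x i|),
      integral_fun_snd (fun y : ℝ => |y|)]
    simp
  rw [← hhS] at hκ2
  set M := 3750 * (∫ z, h z ∂μ) * m with hM
  have hM0 : 0 ≤ M := by
    have : 0 ≤ ∫ z, h z ∂μ := integral_nonneg hh0
    positivity
  obtain ⟨T, hTW, hTnet, hTcard⟩ := exists_loss_net d hcont hW hM0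
    (show 0 < ε / 16 by positivity) hδ0 κ hκ0 hκ2
  let P : Measure (Fin m → EuclideanSpace ℝ (Fin d) × ℝ) := Measure.pi fun _ => μ
  let B₁ : Set (Fin m → EuclideanSpace ℝ (Fin d) × ℝ) := {x | ∃ j, x j ∈ {z | M < h z}}
  let B₂ : EuclideanSpace ℝ (Fin d) → Set (Fin m → EuclideanSpace ℝ (Fin d) × ℝ) :=
    fun w => {x | t < |blockMean (F w) x - ∫ z, F w z ∂μ|}
  have hB₁ : P B₁ ≤ ENNReal.ofReal (1 / 3750) :=
    pi_exists_large_le μ hhm hh0 hhint m hmpos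
  have hB₂ : ∀ w, ‖w‖ ≤ W → P (B₂ w) ≤ ENNReal.ofReal (1 / 500) := fun w hw =>
    blockMean_concentration μ (hFm w) (hF0 w) hp1 hp2 (hFint w hw) (hFv w hw) hmpos htpos hvt
  have hB₁m : MeasurableSet B₁ := by
    have : B₁ = ⋃ j, (fun x => x j) ⁻¹' {z | M < h z} := by ext; simp [B₁]
    rw [this]
    exact MeasurableSet.iUnion fun j =>
      measurable_pi_apply j (measurableSet_lt measurable_const hhm)
  have hB₂m : ∀ w, MeasurableSet (B₂ w) := by
    intro w
    have : Measurable fun x : Fin m → EuclideanSpace ℝ (Fin d) × ℝ => blockMean (F w) x :=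
      (Finset.measurable_sum _ fun j _ => (hFm w).comp (measurable_pi_apply j)).div_const _
    exact measurableSet_lt measurable_const (this.sub_const _).abs
  have hblock : ∀ w w' : EuclideanSpace ℝ (Fin d),
      (∀ z : EuclideanSpace ℝ (Fin d) × ℝ, h z ≤ M → |F w z - F w' z| ≤ ε / 16) →
      ∀ x, x ∉ B₁ → |blockMean (F w) x - blockMean (F w') x| ≤ ε / 16 := by
    intro w w' hww x hx
    refine blockMean_sub_le (by positivity) fun j => hww _ ?_
    by_contra! hlt
    exact hx ⟨j, hlt⟩
  -- The means of close losses are close: with positive probability a single block witnesses it.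
  have hE : ∀ w w' : EuclideanSpace ℝ (Fin d), ‖w‖ ≤ W → ‖w'‖ ≤ W →
      (∀ z : EuclideanSpace ℝ (Fin d) × ℝ, h z ≤ M → |F w z - F w' z| ≤ ε / 16) →
      |∫ z, F w z ∂μ - ∫ z, F w' z ∂μ| ≤ 2 * t + ε / 16 := by
    intro w w' hw hw' hww
    have hlt : P (B₁ ∪ B₂ w ∪ B₂ w') < 1 := by
      refine ((measure_union_le _ _).trans
        (add_le_add (measure_union_le _ _) le_rfl)).trans_lt ?_
      refine (add_le_add (add_le_add hB₁ (hB₂ w hw)) (hB₂ w' hw')).trans_lt ?_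
      rw [← ENNReal.ofReal_add (by norm_num) (by norm_num),
        ← ENNReal.ofReal_add (by norm_num) (by norm_num), ENNReal.ofReal_lt_one]
      norm_num
    obtain ⟨x, hx⟩ : ∃ x, x ∉ B₁ ∪ B₂ w ∪ B₂ w' := by
      by_contra! hcon
      rw [Set.eq_univ_iff_forall.2 hcon, measure_univ] at hlt
      exact lt_irrefl _ hlt
    simp only [Set.mem_union, not_or] at hx
    have h1 := hblock w w' hww x hx.1.1
    have h2 : |blockMean (F w) x - ∫ z, F w z ∂μ| ≤ t := not_lt.1 hx.1.2
    have h3 : |blockMean (F w') x - ∫ z, F w' z ∂μ| ≤ t := not_lt.1 hx.2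
    rw [abs_le] at *
    constructor <;> linarith
  let Q : Measure (Fin κ → Fin m → EuclideanSpace ℝ (Fin d) × ℝ) := Measure.pi fun _ => P
  let E : EuclideanSpace ℝ (Fin d) → Set (Fin κ → Fin m → EuclideanSpace ℝ (Fin d) × ℝ) :=
    fun w => {Z | κ ≤ 2 * (Finset.univ.filter fun i => Z i ∈ B₁ ∪ B₂ w).card}
  have hEw : ∀ w ∈ T, Q (E w) ≤ ENNReal.ofReal (Real.exp (-(κ / 50))) := by
    intro w hw
    suffices hq : P (B₁ ∪ B₂ w) ≤ ENNReal.ofReal (1 / 400) by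
      convert pi_majority_bad_le P κ _ (hB₁m.union (hB₂m w)) hq
    refine (measure_union_le _ _).trans ((add_le_add hB₁ (hB₂ w (hTW w hw))).trans ?_)
    rw [← ENNReal.ofReal_add (by norm_num) (by norm_num)]
    exact ENNReal.ofReal_le_ofReal (by norm_num)
  have hbad : Q (⋃ w ∈ T, E w) ≤ ENNReal.ofReal δ := by
    refine (measure_biUnion_finset_le T E).trans ((Finset.sum_le_sum hEw).trans ?_)
    rw [Finset.sum_const, nsmul_eq_mul, ← ENNReal.ofReal_natCast,
      ← ENNReal.ofReal_mul (by positivity)]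
    exact ENNReal.ofReal_le_ofReal hTcard
  have hgood : (⋃ w ∈ T, E w)ᶜ ⊆
      {Z | ∀ f ∈ linRegClass d ℓ W, |mom f Z - ∫ z, f z ∂μ| ≤ ε} := by
    intro Z hZ
    rintro f ⟨w, hw, rfl⟩
    change |mom (F w) Z - ∫ z, F w z ∂μ| ≤ ε
    obtain ⟨w', hw', hww⟩ := hTnet w hw
    have hZw : 2 * (Finset.univ.filter fun i => Z i ∈ B₁ ∪ B₂ w').card < κ := by
      by_contra! hcon
      exact hZ (Set.mem_iUnion₂.2 ⟨w', hw', hcon⟩)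
    have hmem : mom (F w) Z ∈
        Set.Icc (∫ z, F w z ∂μ - ε) (∫ z, F w z ∂μ + ε) := by
      refine median_mem_Icc _ _ _ (lt_of_le_of_lt ?_ hZw)
      refine Nat.mul_le_mul_left 2 (Finset.card_le_card fun i hi => ?_)
      simp only [Finset.mem_filter, Finset.mem_univ, true_and] at hi ⊢
      by_contra hcon
      apply hi
      simp only [Set.mem_union, not_or] at hcon
      have h1 := hblock w w' hww (Z i) hcon.1
      have h2 : |blockMean (F w') (Z i) - ∫ z, F w' z ∂μ| ≤ t := not_lt.1 hcon.2
      have h3 := hE w w' hw (hTW w' hw') hww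
      rw [abs_le] at h1 h2 h3
      constructor <;> linarith
    rw [abs_le]
    constructor <;> linarith [hmem.1, hmem.2]
  refine le_trans ?_ (measure_mono hgood)
  have htot : 1 ≤ Q (⋃ w ∈ T, E w)ᶜ + Q (⋃ w ∈ T, E w) := by
    rw [← measure_univ (μ := Q), ← Set.compl_union_self (⋃ w ∈ T, E w)]
    exact measure_union_le _ _
  rw [ENNReal.ofReal_sub _ hδ0.le, ENNReal.ofReal_one]
  exact tsub_le_iff_right.2 (htot.trans (add_le_add le_rfl hbad))
end
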